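/- arXiv:1502.04429 — 5 statements merged into one kernel-verified Lean document; each statement's English description precedes it below -/
import Mathlib

section
/- Let L be a first-order language and let A be a countable L-structure that is ultrahomogeneous, locally finite, and linearly ordered, and such that the class of finite substructures of A has the Ramsey property. Then the automorphism group Aut(A), equipped with the topology of pointwise convergence (A discrete) and with composition as the group operation, is extremely amenable, i.e., every continuous action of Aut(A) on a nonempty compact Hausdorff space has a fixed point. -/
open FirstOrder

/-- A topological group `G` is *extremely amenable* if every continuous action of `G` on a
nonempty compact Hausdorff space has a fixed point. -/
def ExtremelyAmenable (G : Type) [Group G] [TopologicalSpace G] : Prop :=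
  ∀ (K : Type) [TopologicalSpace K] [CompactSpace K] [T2Space K] [Nonempty K]
    [MulAction G K] [ContinuousSMul G K], ∃ x : K, ∀ g : G, g • x = x

namespace FirstOrder.Language

variable (L : FirstOrder.Language.{0, 0}) (M : Type) [L.Structure M]

/-- `M` is *ultrahomogeneous* if every isomorphism between two finite substructures of `M`
extends to an automorphism of `M`. -/
def UltrahomogeneousFin : Prop :=
  ∀ (S₁ S₂ : L.Substructure M), Finite S₁ → Finite S₂ →
    ∀ φ : S₁ ≃[L] S₂, ∃ ψ : M ≃[L] M, ∀ x : S₁, ψ (x : M) = (φ x : M)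

/-- `M` is *locally finite* if every finitely generated substructure of `M` is finite. -/
def LocallyFiniteStruct : Prop :=
  ∀ S : L.Substructure M, S.FG → Finite S

/-- `M` is *linearly ordered*: `L` has a binary relation symbol interpreted in `M` as a
linear order. -/
def LinearlyOrderedStruct : Prop :=
  ∃ r : L.Relations 2, IsLinearOrder M (fun a b => Structure.RelMap r ![a, b])

/-- The class of finite substructures of `M` has the *Ramsey property*. -/
def FiniteSubstructureRamsey : Prop :=
  ∀ c : ℕ, 0 < c → ∀ A₀ B₀ : L.Substructure M, Finite A₀ → Finite B₀ →
    ∃ C₀ : L.Substructure M, Finite C₀ ∧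
      ∀ χ : L.Substructure M → Fin c,
        ∃ B' : L.Substructure M, B' ≤ C₀ ∧ Nonempty (B' ≃[L] B₀) ∧
          ∃ color : Fin c, ∀ A' : L.Substructure M,
            A' ≤ B' → Nonempty (A' ≃[L] A₀) → χ A' = color

/-- The automorphism group of `M`, with composition as the group operation. -/
instance autGroup : Group (M ≃[L] M) where
  mul f g := f.comp g
  one := Equiv.refl L M
  inv := Equiv.symm
  mul_assoc f g h := (Equiv.comp_assoc h g f).symm
  one_mul _ := rfl
  mul_one _ := rfl
  inv_mul_cancel f := by
    ext x
    exact f.symm_apply_apply x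

/-- The topology of pointwise convergence on the automorphism group of `M`
(`M` discrete). -/
def autTopology : TopologicalSpace (M ≃[L] M) :=
  TopologicalSpace.induced (fun (f : M ≃[L] M) => (f : M → M))
    (@Pi.topologicalSpace M (fun _ => M) (fun _ => ⊥))

end FirstOrder.Language

open Topology Uniformity in
/-- Approximate fixed points suffice in a compact Hausdorff uniform space. -/
theorem kpt_fixed_of_approx {G K : Type} [Group G] [UniformSpace K] [CompactSpace K] [T2Space K]
    [MulAction G K] (hc : ∀ g : G, Continuous fun x : K => g • x)
    (h : ∀ U ∈ 𝓤 K, ∀ F : Finset G, ∃ x : K, ∀ g ∈ F, (g • x, x) ∈ U) :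
    ∃ x : K, ∀ g : G, g • x = x := by
  classical
  let ι := G × {U : Set (K × K) // U ∈ 𝓤 K ∧ IsClosed U}
  let t : ι → Set K := fun i => {x | (i.1 • x, x) ∈ i.2.1}
  have hcl : ∀ i, IsClosed (t i) := fun i =>
    i.2.2.2.preimage ((hc i.1).prodMk continuous_id)
  have hne : (Set.univ ∩ ⋂ i, t i).Nonempty := by
    refine isCompact_univ.inter_iInter_nonempty t hcl ?_
    intro u
    have hU : (⋂ i ∈ u, i.2.1) ∈ 𝓤 K :=
      (Filter.biInter_finset_mem u).2 fun i _ => i.2.2.1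
    obtain ⟨x, hx⟩ := h _ hU (u.image Prod.fst)
    refine ⟨x, trivial, ?_⟩
    simp only [Set.mem_iInter]
    intro i hi
    have := hx i.1 (Finset.mem_image_of_mem _ hi)
    simp only [Set.mem_iInter] at this
    exact this i hi
  obtain ⟨x, -, hx⟩ := hne
  refine ⟨x, fun g => ?_⟩
  refine eq_of_uniformity_basis uniformity_hasBasis_closed ?_
  intro V hV
  have := Set.mem_iInter.1 hx (g, ⟨V, hV⟩)
  exact this

namespace FirstOrder.Language

/-- Automorphisms preserving a finite substructure fix it pointwise. -/
theorem kpt_rigid (L : FirstOrder.Language.{0, 0}) (M : Type) [L.Structure M]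
    (hLin : L.LinearlyOrderedStruct M) (A : L.Substructure M) (hA : Finite A)
    (g : M ≃[L] M) (hg : A.map g.toEmbedding.toHom = A) (x : M) (hx : x ∈ A) : g x = x := by
  classical
  obtain ⟨r, hr⟩ := hLin
  letI : LinearOrder A :=
    { le := fun a b => Structure.RelMap r ![(a : M), (b : M)]
      le_refl := fun a => hr.refl (a : M)
      le_trans := fun a b c => hr.trans (a : M) b c
      le_antisymm := fun a b h1 h2 => Subtype.ext (hr.antisymm (a : M) b h1 h2)
      le_total := fun a b => hr.total (a : M) b
      toDecidableLE := Classical.decRel _ }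
  have hmem : ∀ a : A, g a ∈ A := fun a => by
    exact hg.le ⟨(a : M), a.2, rfl⟩
  have hle : ∀ a b : M, Structure.RelMap r ![g a, g b] ↔ Structure.RelMap r ![a, b] := by
    intro a b
    rw [← g.map_rel r (![a, b])]
    have : (![g a, g b] : Fin 2 → M) = g ∘ ![a, b] := by
      ext i; fin_cases i <;> rfl
    rw [this]
  let f : A ↪o A :=
    OrderEmbedding.ofMapLEIff (fun a => (⟨g a, hmem a⟩ : A)) fun a b => hle a b
  have hb : Function.Surjective f := Finite.surjective_of_injective f.injective
  let e : A ≃o A := RelIso.ofSurjective f hb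
  have he : e = OrderIso.refl A := Subsingleton.elim _ _
  have h2 : e ⟨x, hx⟩ = ⟨x, hx⟩ := by rw [he]; rfl
  exact congrArg Subtype.val h2

open Topology in
/-- Basic neighborhoods of the identity in the automorphism group. -/
theorem kpt_nhds_one (L : FirstOrder.Language.{0, 0}) (M : Type) [L.Structure M]
    (s : Set (M ≃[L] M)) (hs : s ∈ @nhds _ (L.autTopology M) 1) :
    ∃ I : Set M, I.Finite ∧ ∀ g : M ≃[L] M, (∀ x ∈ I, g x = x) → g ∈ s := by
  letI : TopologicalSpace M := ⊥
  haveI : DiscreteTopology M := ⟨rfl⟩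
  unfold autTopology at hs
  rw [nhds_induced, Filter.mem_comap] at hs
  obtain ⟨t, ht, hts⟩ := hs
  rw [nhds_pi, Filter.mem_pi] at ht
  obtain ⟨I, hI, u, hu, hut⟩ := ht
  refine ⟨I, hI, fun g hg => hts (hut ?_)⟩
  intro i hi
  have h1 : g i = i := hg i hi
  change g i ∈ u i
  rw [h1]
  exact mem_of_mem_nhds (hu i)

open Topology Uniformity in
theorem kpt_approx (L : FirstOrder.Language.{0, 0}) (M : Type) [L.Structure M]
    (hU : L.UltrahomogeneousFin M) (hLF : L.LocallyFiniteStruct M)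
    (hLin : L.LinearlyOrderedStruct M) (hR : L.FiniteSubstructureRamsey M)
    (K : Type) [UniformSpace K] [CompactSpace K] [Nonempty K] [MulAction (M ≃[L] M) K]
    (hc : @ContinuousSMul (M ≃[L] M) K _ (L.autTopology M) _)
    (U : Set (K × K)) (hUU : U ∈ 𝓤 K) (F : Finset (M ≃[L] M)) :
    ∃ x : K, ∀ g ∈ F, (g • x, x) ∈ U := by
  classical
  letI : TopologicalSpace (M ≃[L] M) := L.autTopology M
  obtain ⟨W, hW, hWo, hWs, hWU⟩ := comp_open_symm_mem_uniformity_sets hUU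
  obtain ⟨V, hV, hVo, hVs, hVW⟩ := comp_open_symm_mem_uniformity_sets hW
  have hcW : ∀ a b c : K, (a, b) ∈ V → (b, c) ∈ V → (a, c) ∈ W := fun a b c h1 h2 =>
    hVW ⟨b, h1, h2⟩
  have hcU : ∀ a b c : K, (a, b) ∈ W → (b, c) ∈ W → (a, c) ∈ U := fun a b c h1 h2 =>
    hWU ⟨b, h1, h2⟩
  have hsW : ∀ a b : K, (a, b) ∈ W → (b, a) ∈ W := fun a b h => hWs.symm a b h
  have hsV : ∀ a b : K, (a, b) ∈ V → (b, a) ∈ V := fun a b h => hVs.symm a b h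
  -- uniform smallness
  have hnear : ∀ᶠ g in 𝓝 (1 : M ≃[L] M), ∀ y ∈ (Set.univ : Set K), (g • y, y) ∈ V := by
    refine isCompact_univ.eventually_forall_of_forall_eventually ?_
    intro y _
    have hcont : Continuous fun z : (M ≃[L] M) × K => (z.1 • z.2, z.2) :=
      continuous_smul.prodMk continuous_snd
    have : V ∈ 𝓝 ((1 : M ≃[L] M) • y, y) := hVo.mem_nhds (by
      rw [one_smul]; exact refl_mem_uniformity hV)
    exact hcont.continuousAt.preimage_mem_nhds this
  obtain ⟨I, hI, hIs⟩ := kpt_nhds_one L M _ hnear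
  let A : L.Substructure M := Substructure.closure L I
  have hAfin : Finite A := hLF _ (Substructure.fg_closure hI)
  have hIA : I ⊆ A := Substructure.subset_closure
  let mp : (M ≃[L] M) → L.Substructure M := fun g => A.map g.toEmbedding.toHom
  -- finite cover
  obtain ⟨T, hT⟩ := CompactSpace.elim_nhds_subcover (fun x : K => {y | (y, x) ∈ V})
    (fun x => mem_nhds_right x hV)
  have hTne : T.Nonempty := by
    obtain ⟨x⟩ := ‹Nonempty K›
    have : x ∈ ⋃ y ∈ T, {z | (z, y) ∈ V} := by rw [hT]; trivial
    simp only [Set.mem_iUnion] at this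
    obtain ⟨y, hy, _⟩ := this
    exact ⟨y, hy⟩
  have hidx : ∀ x : K, ∃ i : T, (x, (i : K)) ∈ V := by
    intro x
    have : x ∈ ⋃ y ∈ T, {z | (z, y) ∈ V} := by rw [hT]; trivial
    simp only [Set.mem_iUnion] at this
    obtain ⟨y, hy, h⟩ := this
    exact ⟨⟨y, hy⟩, h⟩
  choose idx hidx using hidx
  obtain ⟨x₀⟩ := ‹Nonempty K›
  let χ : L.Substructure M → T := fun A' =>
    if h : ∃ g, mp g = A' then idx ((Classical.choose h)⁻¹ • x₀) else ⟨_, hTne.choose_spec⟩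
  have hχ : ∀ g, (g⁻¹ • x₀, (χ (mp g) : K)) ∈ W := by
    intro g
    have hex : ∃ g', mp g' = mp g := ⟨g, rfl⟩
    have hval : χ (mp g) = idx ((Classical.choose hex)⁻¹ • x₀) := dif_pos hex
    rw [hval]
    have hspec := Classical.choose_spec hex
    set g' := Classical.choose hex
    have hfix : ∀ x ∈ I, (g⁻¹ * g') x = x := by
      intro x hx
      refine kpt_rigid L M hLin A hAfin _ ?_ x (hIA hx)
      have h1 : A.map (g⁻¹ * g').toEmbedding.toHom
          = (mp g').map (g⁻¹).toEmbedding.toHom := by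
        ext y
        constructor
        · rintro ⟨z, hz, rfl⟩
          exact ⟨g' z, ⟨z, hz, rfl⟩, rfl⟩
        · rintro ⟨_, ⟨z, hz, rfl⟩, rfl⟩
          exact ⟨z, hz, rfl⟩
      rw [h1, hspec]
      change (A.map g.toEmbedding.toHom).map (g⁻¹).toEmbedding.toHom = A
      rw [Substructure.map_map]
      have h2 : (g⁻¹).toEmbedding.toHom.comp g.toEmbedding.toHom = Hom.id L M := by
        ext y
        exact g.symm_apply_apply y
      rw [h2, Substructure.map_id]
    have h3 := hIs _ hfix (g'⁻¹ • x₀) trivial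
    rw [smul_smul, mul_assoc, mul_inv_cancel, mul_one] at h3
    exact hcW _ _ _ h3 (hidx _)
  -- the big structure
  let B : L.Substructure M :=
    Substructure.closure L ((A : Set M) ∪ ⋃ f ∈ F, ((mp f⁻¹ : L.Substructure M) : Set M))
  have hmpfin : ∀ g, ((mp g : L.Substructure M) : Set M).Finite := fun g =>
    Set.Finite.image _ (Set.toFinite (A : Set M))
  have hBfin : Finite B := hLF _ (Substructure.fg_closure
    ((Set.toFinite (A : Set M)).union (F.finite_toSet.biUnion fun f _ => hmpfin _)))
  have hAB : A ≤ B := fun x hx => Substructure.subset_closure (Or.inl hx)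
  have hFB : ∀ f ∈ F, mp f⁻¹ ≤ B := fun f hf x hx =>
    Substructure.subset_closure (Or.inr (Set.mem_biUnion hf hx))
  obtain ⟨C, hC, hCχ⟩ := hR T.card hTne.card_pos A B hAfin hBfin
  obtain ⟨B', hB'C, ⟨φ⟩, col, hcol⟩ := hCχ fun A' => T.equivFin (χ A')
  have hB'fin : Finite B' := Finite.of_equiv _ φ.symm.toEquiv
  obtain ⟨ψ, hψ⟩ := hU B B' hBfin hB'fin φ.symm
  have hψB : ∀ x ∈ B, ψ x ∈ B' := fun x hx => by
    have := hψ ⟨x, hx⟩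
    simp only at this
    rw [this]; exact (φ.symm ⟨x, hx⟩).2
  have hcolor : ∀ g, mp g ≤ B → χ (mp (ψ * g)) = T.equivFin.symm col := by
    intro g hg
    rw [Equiv.eq_symm_apply]
    refine hcol _ ?_ ⟨((ψ * g).toEmbedding.substructureEquivMap A).symm⟩
    rintro _ ⟨x, hx, rfl⟩
    exact hψB _ (hg ⟨x, hx, rfl⟩)
  refine ⟨ψ⁻¹ • x₀, fun f hf => ?_⟩
  have e1 := hχ (ψ * f⁻¹)
  rw [hcolor _ (hFB f hf)] at e1
  have e2 := hχ (ψ * 1)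
  have hm1 : mp 1 ≤ B := by
    rintro _ ⟨x, hx, rfl⟩
    exact hAB hx
  rw [hcolor _ hm1, mul_one] at e2
  rw [mul_inv_rev, inv_inv, ← smul_smul] at e1
  exact hcU _ _ _ e1 (hsW _ _ e2)

end FirstOrder.Language

/-- **Kechris–Pestov–Todorcevic (one direction).** If `A` is a countable, ultrahomogeneous,
locally finite, linearly ordered structure whose class of finite substructures has the
Ramsey property, then `Aut(A)` with the topology of pointwise convergence is extremely
amenable. -/
theorem kpt_extremelyAmenable (L : FirstOrder.Language.{0, 0}) (M : Type) [L.Structure M] [Countable M]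
    (hU : L.UltrahomogeneousFin M) (hLF : L.LocallyFiniteStruct M)
    (hLin : L.LinearlyOrderedStruct M) (hR : L.FiniteSubstructureRamsey M) :
    letI : TopologicalSpace (M ≃[L] M) := L.autTopology M
    ExtremelyAmenable (M ≃[L] M) := by
  letI τ : TopologicalSpace (M ≃[L] M) := L.autTopology M
  intro K tK cK hK nK aK sK
  letI : UniformSpace K := uniformSpaceOfCompactR1
  refine kpt_fixed_of_approx (fun g => ?_) ?_
  · exact continuous_const_smul g
  · intro U hUU F
    exact FirstOrder.Language.kpt_approx L M hU hLF hLin hR K sK U hUU F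
end

section
/- Let G be a non-Archimedean, second countable, completely metrizable topological group that is extremely amenable. Then there exist a countable first-order language L and a countable L-structure A that is ultrahomogeneous, locally finite, and linearly ordered, such that the class of finite substructures of A has the Ramsey property and G is isomorphic as a topological group to the automorphism group Aut(A) equipped with the topology of pointwise convergence (A discrete) and composition as the group operation. -/
open FirstOrder

open Topology Pointwise

namespace KPT

section EA
variable {G : Type} [Group G] [TopologicalSpace G] [IsTopologicalGroup G]

lemma ea_fix (hEA : ExtremelyAmenable G) (X : Type) [MulAction G X]
    (hX : ∀ (x : X) (g₀ : G), ∀ᶠ g in 𝓝 g₀, g • x = g₀ • x)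
    (F : Type) [TopologicalSpace F] [CompactSpace F] [T2Space F] (K : Set (X → F))
    (hc : IsClosed K) (hne : K.Nonempty)
    (hinv : ∀ (g : G), ∀ χ ∈ K, (fun x => χ (g⁻¹ • x)) ∈ K) :
    ∃ χ ∈ K, ∀ (g : G) (x : X), χ (g • x) = χ x := by
  letI : MulAction G K :=
    { smul := fun g χ => ⟨fun x => χ.1 (g⁻¹ • x), hinv g χ.1 χ.2⟩
      one_smul := fun χ => by
        apply Subtype.ext; funext x
        show χ.1 ((1 : G)⁻¹ • x) = χ.1 x
        simp
      mul_smul := fun g h χ => by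
        apply Subtype.ext; funext x
        show χ.1 ((g * h)⁻¹ • x) = χ.1 (h⁻¹ • g⁻¹ • x)
        simp [mul_smul] }
  haveI : CompactSpace K := isCompact_iff_compactSpace.1 hc.isCompact
  haveI : Nonempty K := hne.to_subtype
  haveI : ContinuousSMul G K := by
    refine ⟨?_⟩
    rw [Topology.IsInducing.subtypeVal.continuous_iff, continuous_pi_iff]
    intro x
    rw [continuous_iff_continuousAt]
    rintro ⟨g₀, χ₀⟩
    show ContinuousAt (fun p : G × K => p.2.1 (p.1⁻¹ • x)) (g₀, χ₀)
    have h1 : ContinuousAt (fun p : G × K => p.2.1 (g₀⁻¹ • x)) (g₀, χ₀) :=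
      ((continuous_apply (g₀⁻¹ • x)).comp
        (continuous_subtype_val.comp continuous_snd)).continuousAt
    refine h1.congr ?_
    have h2 : Filter.Tendsto (fun p : G × K => p.1⁻¹) (𝓝 (g₀, χ₀)) (𝓝 g₀⁻¹) :=
      (continuous_fst.inv).continuousAt
    filter_upwards [h2.eventually (hX x g₀⁻¹)] with p hp
    rw [hp]
  obtain ⟨χ, hχ⟩ := hEA K
  refine ⟨χ.1, χ.2, fun g x => ?_⟩
  have h := congrFun (congrArg Subtype.val (hχ g⁻¹)) x
  have h' : χ.1 ((g⁻¹)⁻¹ • x) = χ.1 x := h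
  simpa using h'

variable (M : Type) [MulAction G M]

lemma exists_order (hEA : ExtremelyAmenable G) [Countable M]
    (hM : ∀ (x : M) (g₀ : G), ∀ᶠ g in 𝓝 g₀, g • x = g₀ • x) :
    ∃ r : M → M → Prop, IsLinearOrder M r ∧ ∀ (g : G) a b, r (g • a) (g • b) ↔ r a b := by
  classical
  obtain ⟨χ, hχ, hfix⟩ := ea_fix hEA (M × M)
    (fun x g₀ => by
      filter_upwards [hM x.1 g₀, hM x.2 g₀] with g h1 h2
      exact Prod.ext h1 h2) Bool
    {f | (∀ a, f (a, a) = true) ∧ (∀ a b c, f (a, b) = true → f (b, c) = true → f (a, c) = true) ∧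
      (∀ a b, f (a, b) = true → f (b, a) = true → a = b) ∧
      (∀ a b, f (a, b) = true ∨ f (b, a) = true)}
    (by
      have hcl : ∀ (p : M × M) (b : Bool), IsClopen {f : M × M → Bool | f p = b} := fun p b =>
        (isClopen_discrete {b}).preimage (continuous_apply p)
      have e : ∀ {P Q : (M × M → Bool) → Prop}, IsClopen {f | P f} → IsClopen {f | Q f} →
          IsClopen {f | P f → Q f} := by
        intro P Q h1 h2
        have : {f | P f → Q f} = {f | P f}ᶜ ∪ {f | Q f} := by
          ext f; simp [imp_iff_not_or]
        rw [this]; exact h1.compl.union h2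
      refine IsClosed.inter (?_ : IsClosed {f | _}) (IsClosed.inter (?_ : IsClosed {f | _})
        (IsClosed.inter (?_ : IsClosed {f | _}) (?_ : IsClosed {f | _})))
      · simp only [Set.ofPred_forall]
        exact isClosed_iInter fun a => (hcl _ _).1
      · simp only [Set.ofPred_forall]
        exact isClosed_iInter fun a => isClosed_iInter fun b => isClosed_iInter fun c =>
          (e (hcl _ _) (e (hcl _ _) (hcl _ _))).1
      · rw [Set.ofPred_forall]
        refine isClosed_iInter fun a => ?_
        rw [Set.ofPred_forall]
        refine isClosed_iInter fun b => ?_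
        refine (e (hcl _ _) (e (hcl _ _) ?_)).1
        by_cases h : a = b <;> simp [h, isClopen_univ, isClopen_empty]
      · simp only [Set.ofPred_forall]
        exact isClosed_iInter fun a => isClosed_iInter fun b =>
          ((hcl _ _).union (hcl _ _)).1)
    (by
      obtain ⟨f, hf⟩ := Countable.exists_injective_nat M
      refine ⟨fun p => decide (f p.1 ≤ f p.2), ?_, ?_, ?_, ?_⟩ <;> simp only [decide_eq_true_eq]
      · intros; exact le_rfl
      · intro a b c h1 h2; exact h1.trans h2
      · intro a b h1 h2; exact hf (le_antisymm h1 h2)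
      · intro a b; exact le_total _ _)
    (by
      rintro g χ ⟨h1, h2, h3, h4⟩
      refine ⟨fun a => h1 _, fun a b c => h2 _ _ _, fun a b ha hb => ?_, fun a b => h4 _ _⟩
      exact smul_left_cancel _ (h3 _ _ ha hb))
  obtain ⟨h1, h2, h3, h4⟩ := hχ
  refine ⟨fun a b => χ (a, b) = true, ?_, fun g a b => ?_⟩
  · exact { refl := h1, trans := h2, antisymm := h3, total := h4 }
  · have := hfix g (a, b)
    rw [Prod.smul_mk] at this
    simp only [this]

lemma ramsey (hEA : ExtremelyAmenable G) [DecidableEq M]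
    (hM : ∀ (x : M) (g₀ : G), ∀ᶠ g in 𝓝 g₀, g • x = g₀ • x)
    (c : ℕ) (a b : Finset M) :
    ∃ C : Finset M, ∀ χ : Finset M → Fin c, ∃ g : G, g • b ⊆ C ∧
      ∃ color, ∀ h : G, h • a ⊆ g • b → χ (h • a) = color := by
  by_contra hcon
  push Not at hcon
  have hfin : ∀ (x : Finset M) (g₀ : G), ∀ᶠ g in 𝓝 g₀, g • x = g₀ • x := by
    intro x g₀
    have : ∀ᶠ g in 𝓝 g₀, ∀ m ∈ x, g • m = g₀ • m :=
      (Filter.eventually_all_finset x).2 fun m _ => hM m g₀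
    filter_upwards [this] with g hg
    exact Finset.image_congr hg
  have hclosed : ∀ g : G, IsClosed {χ : Finset M → Fin c | ∀ color, ∃ h : G,
      h • a ⊆ g • b ∧ χ (h • a) ≠ color} := by
    intro g
    rw [Set.ofPred_forall]
    refine isClosed_iInter fun color => ?_
    have : {χ : Finset M → Fin c | ∃ h : G, h • a ⊆ g • b ∧ χ (h • a) ≠ color} =
        ⋃ s ∈ {s : Finset M | s ⊆ g • b ∧ ∃ h : G, h • a = s}, {χ | χ s ≠ color} := by
      ext χ
      simp only [Set.mem_iUnion, Set.mem_ofPred_eq]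
      constructor
      · rintro ⟨h, h1, h2⟩
        exact ⟨_, ⟨h1, h, rfl⟩, h2⟩
      · rintro ⟨_, ⟨h1, h, rfl⟩, h2⟩
        exact ⟨h, h1, h2⟩
    rw [this]
    refine Set.Finite.isClosed_biUnion ?_ fun s _ => ?_
    · refine ((g • b).powerset.finite_toSet).subset ?_
      rintro s ⟨hs, _⟩
      exact Finset.mem_coe.2 (Finset.mem_powerset.2 hs)
    · exact (isClosed_discrete {x : Fin c | x ≠ color}).preimage
        (continuous_apply (A := fun _ : Finset M => Fin c) s)
  obtain ⟨χ, hχ, hfix⟩ := ea_fix hEA (Finset M) hfin (Fin c)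
    (⋂ g : G, {χ | ∀ color, ∃ h : G, h • a ⊆ g • b ∧ χ (h • a) ≠ color})
    (isClosed_iInter hclosed)
    (by
      refine Set.Nonempty.mono (Set.inter_subset_right (s := Set.univ))
        (isCompact_univ.inter_iInter_nonempty _ hclosed fun u => ?_)
      obtain ⟨χ, hχ⟩ := hcon (u.biUnion fun g => g • b)
      refine ⟨χ, trivial, ?_⟩
      simp only [Set.mem_iInter, Set.mem_ofPred_eq]
      intro g hg color
      exact hχ g (Finset.subset_biUnion_of_mem (fun g : G => g • b) hg) color)
    (by
      intro k χ hχ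
      simp only [Set.mem_iInter, Set.mem_ofPred_eq] at hχ ⊢
      intro g color
      obtain ⟨h, h1, h2⟩ := hχ (k⁻¹ * g) color
      refine ⟨k * h, ?_, ?_⟩
      · rw [mul_smul] at h1 ⊢
        rwa [Finset.subset_smul_finset_iff, inv_inv] at h1
      · rwa [mul_smul, inv_smul_smul])
  simp only [Set.mem_iInter, Set.mem_ofPred_eq] at hχ
  obtain ⟨h, _, h2⟩ := hχ 1 (χ a)
  exact h2 (hfix h a)

end EA

section Complete

variable {G : Type} [Group G] [TopologicalSpace G] [IsTopologicalGroup G] [PolishSpace G]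
  {M : Type} [MulAction G M]

lemma basis_at (hb : ∀ U ∈ 𝓝 (1 : G), ∃ m : M, ∀ g : G, g • m = m → g ∈ U)
    (g₀ : G) (U : Set G) (hU : U ∈ 𝓝 g₀) : ∃ m : M, ∀ g : G, g • m = g₀ • m → g ∈ U := by
  have : (fun x => g₀ * x) ⁻¹' U ∈ 𝓝 (1 : G) := by
    apply (continuous_const_mul g₀).continuousAt.preimage_mem_nhds
    simpa using hU
  obtain ⟨m, hm⟩ := hb _ this
  refine ⟨m, fun g hg => ?_⟩
  have := hm (g₀⁻¹ * g) (by rw [mul_smul, hg, inv_smul_smul])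
  simpa using this

lemma complete (hM : ∀ (x : M) (g₀ : G), ∀ᶠ g in 𝓝 g₀, g • x = g₀ • x)
    (hb : ∀ U ∈ 𝓝 (1 : G), ∃ m : M, ∀ g : G, g • m = m → g ∈ U)
    (f : M ≃ M) (hf : ∀ F : Finset M, ∃ g : G, ∀ a ∈ F, g • a = f a) :
    ∃ g : G, ∀ a, g • a = f a := by
  classical
  letI := TopologicalSpace.upgradeIsCompletelyMetrizable G
  have hfin : ∀ (F : Finset M) (g₀ : G), ∀ᶠ g in 𝓝 g₀, ∀ m ∈ F, g • m = g₀ • m :=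
    fun F g₀ => (Filter.eventually_all_finset F).2 fun m _ => hM m g₀
  let U : G → Finset M → Set G := fun g F => {k | ∀ a ∈ F, k • a = f (g • a)}
  let O : ℕ → Set G := fun n => {g | ∃ F : Finset M, ∀ k ∈ U g F, ∀ l ∈ U g F,
    dist k l < 1 / (n + 1 : ℝ)}
  have hO : ∀ n, IsOpen (O n) := by
    intro n
    rw [isOpen_iff_mem_nhds]
    rintro g ⟨F, hF⟩
    filter_upwards [hfin F g] with g' hg'
    have : U g' F = U g F := by
      ext k
      exact forall₂_congr fun a ha => by rw [hg' a ha]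
    exact ⟨F, by rw [this]; exact hF⟩
  have hD : ∀ n, Dense (O n) := by
    intro n g₀
    rw [mem_closure_iff_nhds]
    intro W hW
    obtain ⟨m, hm⟩ := basis_at hb g₀ W hW
    obtain ⟨k, hk⟩ := hf {g₀ • m}
    have hk := hk _ (Finset.mem_singleton_self _)
    have hpos : (0 : ℝ) < 1 / (n + 1 : ℝ) / 2 := by positivity
    obtain ⟨m', hm'⟩ := basis_at hb (k * g₀) _ (Metric.ball_mem_nhds (k * g₀) hpos)
    -- g = f⁻¹ k g₀ on m, m'
    obtain ⟨l, hl⟩ := hf {f.symm ((k * g₀) • m), f.symm ((k * g₀) • m')}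
    simp only [Finset.mem_insert, Finset.mem_singleton, forall_eq_or_imp, forall_eq,
      Equiv.apply_symm_apply] at hl
    obtain ⟨l1, l2⟩ := hl
    refine ⟨l⁻¹ * (k * g₀), hm _ ?_, {m'}, ?_⟩
    · rw [mul_smul, inv_smul_eq_iff, ← l1, mul_smul, hk, Equiv.symm_apply_apply]
    · have key : ∀ x ∈ U (l⁻¹ * (k * g₀)) {m'}, dist x (k * g₀) < 1 / (n + 1 : ℝ) / 2 := by
        intro x hx
        have := hx m' (by simp)
        rw [mul_smul, ← l2, inv_smul_smul, Equiv.apply_symm_apply] at this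
        exact hm' x this
      intro x hx y hy
      have h1 := key x hx
      have h2 := key y hy
      have := dist_triangle_right x y (k * g₀)
      linarith
  obtain ⟨g, hg⟩ := (dense_iInter_of_isOpen hO hD).nonempty
  rw [Set.mem_iInter] at hg
  choose F hF using hg
  have hUne : ∀ E : Finset M, ∃ k, k ∈ U g E := by
    intro E
    obtain ⟨l, hl⟩ := hf (E.image fun a => g • a)
    refine ⟨l * g, fun a ha => ?_⟩
    rw [mul_smul]
    exact hl _ (Finset.mem_image_of_mem _ ha)
  have hUmono : ∀ {E E' : Finset M}, E ⊆ E' → U g E' ⊆ U g E :=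
    fun h k hk a ha => hk a (h ha)
  let H : ℕ → Finset M := fun n => (Finset.range (n + 1)).biUnion F
  have hH : ∀ {N n}, N ≤ n → F N ⊆ H n := fun {N n} h =>
    Finset.subset_biUnion_of_mem F (by simp; omega)
  choose k hk using fun n => hUne (H n)
  have hcau : CauchySeq k := by
    rw [Metric.cauchySeq_iff]
    intro ε hε
    obtain ⟨N, hN⟩ := exists_nat_one_div_lt hε
    exact ⟨N, fun m hm n hn => (hF N _ (hUmono (hH hm) (hk m)) _ (hUmono (hH hn) (hk n))).trans hN⟩
  obtain ⟨k₀, hk₀⟩ := cauchySeq_tendsto_of_complete hcau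
  have key : ∀ a, k₀ • a = f (g • a) := by
    intro a
    choose k' hk' using fun n => hUne (insert a (H n))
    have hd : Filter.Tendsto (fun n => dist (k n) (k' n)) Filter.atTop (𝓝 0) := by
      refine squeeze_zero (fun _ => dist_nonneg) (fun n => (hF n _ (hUmono (hH le_rfl) (hk n)) _
        (hUmono ((hH le_rfl).trans (Finset.subset_insert _ _)) (hk' n))).le)
        tendsto_one_div_add_atTop_nhds_zero_nat
    have hk'₀ : Filter.Tendsto k' Filter.atTop (𝓝 k₀) := (tendsto_iff_of_dist hd).1 hk₀
    obtain ⟨n, hn⟩ := (hk'₀.eventually (hM a k₀)).exists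
    rw [← hn]
    exact hk' n a (Finset.mem_insert_self _ _)
  refine ⟨k₀ * g⁻¹, fun a => ?_⟩
  rw [mul_smul, key, smul_inv_smul]

end Complete


section Struct

variable (G M : Type) [Group G] [MulAction G M]

/-- The language of orbits of tuples, with an additional symbol for an order `r`. -/
def orbLang (_r : M → M → Prop) : FirstOrder.Language.{0, 0} :=
  ⟨fun _ => Empty, fun n => Option (MulAction.orbitRel.Quotient G (Fin n → M))⟩

instance orbStr (r : M → M → Prop) : (orbLang G M r).Structure M where
  funMap := fun f _ => Empty.elim f
  RelMap := fun {n} R v =>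
    Option.elim (α := MulAction.orbitRel.Quotient G (Fin n → M)) R
      (∀ i j : Fin n, i.1 = 0 → j.1 = 1 → r (v i) (v j)) (fun q => Quotient.mk _ v = q)

variable {G M} {r : M → M → Prop}

lemma relMap_none {n : ℕ} (v : Fin n → M) :
    FirstOrder.Language.Structure.RelMap (L := orbLang G M r) (M := M) (n := n)
      (none : Option (MulAction.orbitRel.Quotient G (Fin n → M))) v ↔
    ∀ i j : Fin n, i.1 = 0 → j.1 = 1 → r (v i) (v j) := Iff.rfl

lemma relMap_some {n : ℕ} (v w : Fin n → M) :
    FirstOrder.Language.Structure.RelMap (L := orbLang G M r) (M := M) (n := n)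
      (some (Quotient.mk _ w) : Option (MulAction.orbitRel.Quotient G (Fin n → M))) v ↔
    ∃ g : G, g • w = v := by
  show Quotient.mk (MulAction.orbitRel G (Fin n → M)) v = Quotient.mk _ w ↔ _
  rw [Quotient.eq]
  rfl

/-- The automorphism given by a group element. -/
def aut (hr : ∀ (g : G) a b, r (g • a) (g • b) ↔ r a b) (g : G) : M ≃[orbLang G M r] M where
  toEquiv := MulAction.toPerm g
  map_fun' := fun f _ => Empty.elim f
  map_rel' := by
    intro n R v
    rcases R with _ | q
    · erw [relMap_none, relMap_none]
      simp [hr]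
    · induction q using Quotient.inductionOn with | _ w => ?_
      erw [relMap_some, relMap_some]
      constructor
      · rintro ⟨h, hh⟩
        refine ⟨g⁻¹ * h, ?_⟩
        rw [mul_smul, hh]
        funext i
        exact inv_smul_smul g (v i)
      · rintro ⟨h, rfl⟩
        exact ⟨g * h, by rw [mul_smul]; rfl⟩

/-- Every set is a substructure. -/
def sub (r : M → M → Prop) (s : Set M) : (orbLang G M r).Substructure M where
  carrier := s
  fun_mem := fun f => Empty.elim f

lemma partial_iso (S₁ S₂ : (orbLang G M r).Substructure M) [Finite S₁]
    (φ : S₁ ≃[orbLang G M r] S₂) : ∃ g : G, ∀ x : S₁, g • (x : M) = φ x := by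
  obtain ⟨n, ⟨e⟩⟩ := Finite.exists_equiv_fin S₁
  have h := φ.map_rel (n := n)
    (some (Quotient.mk _ (fun i => (e.symm i : M))) :
      Option (MulAction.orbitRel.Quotient G (Fin n → M))) e.symm
  have h2 := h.2 ((relMap_some _ _).2 ⟨1, one_smul _ _⟩)
  obtain ⟨g, hg⟩ := (relMap_some _ _).1 h2
  refine ⟨g, fun x => ?_⟩
  have := congrFun hg (e x)
  simpa using this

lemma partial_aut (f : M ≃[orbLang G M r] M) (F : Finset M) :
    ∃ g : G, ∀ x ∈ F, g • x = f x := by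
  let v : Fin F.card → M := fun i => F.equivFin.symm i
  have h := f.map_rel (n := F.card)
    (some (Quotient.mk _ v) : Option (MulAction.orbitRel.Quotient G (Fin _ → M))) v
  have h2 := h.2 ((relMap_some _ _).2 ⟨1, one_smul _ _⟩)
  obtain ⟨g, hg⟩ := (relMap_some _ _).1 h2
  refine ⟨g, fun x hx => ?_⟩
  have := congrFun hg (F.equivFin ⟨x, hx⟩)
  simpa [v] using this

/-- Translates are isomorphic. -/
lemma sub_equiv (hr : ∀ (g : G) a b, r (g • a) (g • b) ↔ r a b) (g : G)
    (B B' : (orbLang G M r).Substructure M) (h : ∀ x, g • x ∈ B ↔ x ∈ B') :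
    Nonempty (B' ≃[orbLang G M r] B) := by
  refine ⟨{ toEquiv := (MulAction.toPerm g).subtypeEquiv fun x => (h x).symm
            map_fun' := fun f _ => Empty.elim f
            map_rel' := ?_ }⟩
  intro n R v
  exact (aut hr g).map_rel R (fun i => (v i : M))

lemma fin_of_fg (S : (orbLang G M r).Substructure M) (h : S.FG) : Finite S := by
  obtain ⟨t, rfl⟩ := h
  have : FirstOrder.Language.Substructure.closure (orbLang G M r) (t : Set M) ≤ sub r (t : Set M) :=
    FirstOrder.Language.Substructure.closure_le.2 (fun x hx => hx)
  exact (t.finite_toSet.subset this).to_subtype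

lemma main_aux [TopologicalSpace G] [IsTopologicalGroup G] [PolishSpace G] [Countable M]
    (hEA : ExtremelyAmenable G)
    (hM : ∀ (x : M) (g₀ : G), ∀ᶠ g in 𝓝 g₀, g • x = g₀ • x)
    (hb : ∀ U ∈ 𝓝 (1 : G), ∃ m : M, ∀ g : G, g • m = m → g ∈ U) :
    ∃ (L : FirstOrder.Language.{0, 0}) (M : Type) (str : L.Structure M),
      Countable L.Symbols ∧ Countable M ∧
      (letI := str
       L.UltrahomogeneousFin M ∧ L.LocallyFiniteStruct M ∧ L.LinearlyOrderedStruct M ∧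
         L.FiniteSubstructureRamsey M ∧
         (letI : TopologicalSpace (M ≃[L] M) := L.autTopology M
          ∃ e : G ≃* (M ≃[L] M), Continuous e ∧ Continuous e.symm)) := by
  classical
  obtain ⟨r, hlin, hr⟩ := exists_order M hEA hM
  refine ⟨orbLang G M r, M, orbStr G M r, ?_, inferInstance, ?_, ?_, ?_, ?_, ?_⟩
  · have h1 : ∀ n, Countable ((orbLang G M r).Functions n) := fun n =>
      inferInstanceAs (Countable Empty)
    have h2 : ∀ n, Countable ((orbLang G M r).Relations n) := fun n =>
      inferInstanceAs (Countable (Option (MulAction.orbitRel.Quotient G (Fin n → M))))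
    exact inferInstanceAs (Countable ((Σ n, (orbLang G M r).Functions n) ⊕
      (Σ n, (orbLang G M r).Relations n)))
  · intro S₁ S₂ _ _ φ
    obtain ⟨g, hg⟩ := partial_iso S₁ S₂ φ
    exact ⟨aut hr g, hg⟩
  · exact fun S hS => fin_of_fg S hS
  · refine ⟨(none : Option (MulAction.orbitRel.Quotient G (Fin 2 → M))), ?_⟩
    convert hlin using 3 with a b
    erw [relMap_none]
    simp [Fin.forall_fin_two]
  · intro c _ A₀ B₀ hA hB
    have hA' : (A₀ : Set M).Finite := hA
    have hB' : (B₀ : Set M).Finite := hB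
    obtain ⟨C, hC⟩ := ramsey M hEA hM c hA'.toFinset hB'.toFinset
    refine ⟨sub r (C : Set M), C.finite_toSet.to_subtype, fun χ => ?_⟩
    obtain ⟨g, hgC, color, hcol⟩ := hC fun s => χ (sub r (s : Set M))
    refine ⟨sub r ((g • hB'.toFinset : Finset M) : Set M), fun x hx => hgC hx, ?_, color, ?_⟩
    · refine sub_equiv hr g⁻¹ _ _ fun x => ?_
      show _ ↔ x ∈ ((g • hB'.toFinset : Finset M) : Set M)
      rw [Finset.mem_coe, ← Finset.inv_smul_mem_iff]
      simp
    · rintro A' hA'B ⟨φ⟩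
      obtain ⟨h, hh⟩ := partial_iso A₀ A' φ.symm
      have : ((h • hA'.toFinset : Finset M) : Set M) = A' := by
        ext x
        rw [Finset.mem_coe, Finset.mem_smul_finset]
        constructor
        · rintro ⟨y, hy, rfl⟩
          have hy : y ∈ A₀ := by simpa using hy
          rw [hh ⟨y, hy⟩]
          exact (φ.symm ⟨y, hy⟩).2
        · intro hx
          refine ⟨φ ⟨x, hx⟩, by simp, ?_⟩
          rw [hh]
          simp
      have e : A' = sub r ((h • hA'.toFinset : Finset M) : Set M) :=
        SetLike.coe_injective this.symm
      rw [e]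
      refine hcol h ?_
      rw [← Finset.coe_subset, this]
      exact hA'B
  · letI τ : TopologicalSpace (M ≃[orbLang G M r] M) := (orbLang G M r).autTopology M
    let φ : G →* (M ≃[orbLang G M r] M) :=
      { toFun := aut hr
        map_one' := by ext x; exact one_smul G x
        map_mul' := fun g h => by ext x; exact mul_smul g h x }
    have hinj : Function.Injective φ := by
      rw [injective_iff_map_eq_one]
      intro g hg
      by_contra hne
      obtain ⟨m, hm⟩ := hb {g}ᶜ (isOpen_compl_singleton.mem_nhds (Ne.symm hne))
      exact hm g (congrArg (fun f : M ≃[orbLang G M r] M => f m) hg) rfl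
    have hsurj : Function.Surjective φ := by
      intro f
      obtain ⟨g, hg⟩ := complete hM hb f.toEquiv (partial_aut f)
      exact ⟨g, by ext x; exact hg x⟩
    letI : TopologicalSpace M := ⊥
    haveI : DiscreteTopology M := ⟨rfl⟩
    have hind : Topology.IsInducing (fun (f : M ≃[orbLang G M r] M) => (f : M → M)) := ⟨rfl⟩
    refine ⟨MulEquiv.ofBijective φ ⟨hinj, hsurj⟩, ?_, ?_⟩
    · rw [hind.continuous_iff, continuous_pi_iff]
      intro m
      rw [continuous_iff_continuousAt]
      intro g₀
      refine (continuousAt_const (y := g₀ • m)).congr ?_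
      filter_upwards [hM m g₀] with g hg
      exact hg.symm
    · rw [continuous_iff_continuousAt]
      intro f₀
      intro U hU
      obtain ⟨m, hm⟩ := basis_at hb _ U hU
      have hop : IsOpen {f : M ≃[orbLang G M r] M | f m = f₀ m} :=
        (isOpen_discrete {f₀ m}).preimage ((continuous_apply m).comp hind.continuous)
      refine Filter.mem_map.2 (Filter.mem_of_superset (hop.mem_nhds rfl) ?_)
      intro f hf
      refine hm _ ?_
      have h1 : ∀ f : M ≃[orbLang G M r] M,
          (MulEquiv.ofBijective φ ⟨hinj, hsurj⟩).symm f • m = f m := fun f =>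
        congrArg (fun f : M ≃[orbLang G M r] M => f m)
          ((MulEquiv.ofBijective φ ⟨hinj, hsurj⟩).apply_symm_apply f)
      rw [h1, h1]
      exact hf

end Struct

end KPT

open FirstOrder

/-- **Kechris–Pestov–Todorcevic (the other direction).** If `G` is a non-Archimedean, second
countable, completely metrizable (i.e. Polish) topological group that is extremely amenable,
then `G` is topologically isomorphic to the automorphism group (with the topology of
pointwise convergence) of a countable, ultrahomogeneous, locally finite, linearly ordered
structure in a countable language whose class of finite substructures has the Ramsey
property. -/
theorem kpt_reverse (G : Type) [Group G] [TopologicalSpace G] [NonarchimedeanGroup G]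
    [PolishSpace G] (hEA : ExtremelyAmenable G) :
    ∃ (L : FirstOrder.Language.{0, 0}) (M : Type) (str : L.Structure M),
      Countable L.Symbols ∧ Countable M ∧
      (letI := str
       L.UltrahomogeneousFin M ∧ L.LocallyFiniteStruct M ∧ L.LinearlyOrderedStruct M ∧
         L.FiniteSubstructureRamsey M ∧
         (letI : TopologicalSpace (M ≃[L] M) := L.autTopology M
          ∃ e : G ≃* (M ≃[L] M), Continuous e ∧ Continuous e.symm)) := by
  classical
  obtain ⟨U, hU⟩ := (nhds (1 : G)).exists_antitone_basis
  choose V hV using fun n => NonarchimedeanGroup.is_nonarchimedean (U n) (hU.mem n)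
  have hcount : ∀ n, Countable (G ⧸ (V n : Subgroup G)) := by
    intro n
    have : DiscreteTopology (G ⧸ (V n : Subgroup G)) :=
      QuotientGroup.discreteTopology (V n).isOpen
    exact TopologicalSpace.separableSpace_iff_countable.1 inferInstance
  refine KPT.main_aux (M := Σ n, G ⧸ (V n : Subgroup G)) hEA ?_ ?_
  · rintro ⟨n, x⟩ g₀
    induction x using QuotientGroup.induction_on with | _ x => ?_
    have hop : IsOpen {g : G | (g₀ * x)⁻¹ * (g * x) ∈ V n} :=
      (V n).isOpen.preimage (by fun_prop)
    filter_upwards [hop.mem_nhds (show (g₀ * x)⁻¹ * (g₀ * x) ∈ V n by simp [one_mem])] with g hg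
    refine Sigma.ext rfl (heq_of_eq ?_)
    exact (QuotientGroup.eq.2 hg).symm
  · intro W hW
    obtain ⟨n, hn⟩ := hU.mem_iff.1 hW
    refine ⟨⟨n, ((1 : G) : G ⧸ (V n : Subgroup G))⟩, fun g hg => hn (hV n ?_)⟩
    have h1 := eq_of_heq (Sigma.ext_iff.1 hg).2
    have h2 := QuotientGroup.eq.1 (show ((1 : G) : G ⧸ (V n : Subgroup G)) = ((g * 1 : G) : G ⧸ (V n : Subgroup G)) from h1.symm)
    simpa using h2
end

section
/- Given a positive integer c and two finite linearly ordered metric spaces A and B, there exists a finite linearly ordered metric space C such that for every coloring with c colors of the set of all subspaces of C that are order isometric to A, there exists a subspace B' of C order isometric to B such that all subspaces of B' order isometric to A have the same color. -/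
/-- A finite linearly ordered metric space: a finite set equipped with a metric and a
linear order. -/
structure FinOrdMetricSpace where
  carrier : Type
  [met : MetricSpace carrier]
  [lin : LinearOrder carrier]
  [fin : Fintype carrier]

attribute [instance] FinOrdMetricSpace.met FinOrdMetricSpace.lin FinOrdMetricSpace.fin

instance : CoeSort FinOrdMetricSpace Type := ⟨FinOrdMetricSpace.carrier⟩

/-- The subset `s` of `C`, with the induced metric and induced linear order, is *order
isometric* to `A`: there is a bijection from `A` onto `s` preserving the metric and the
linear order. -/
def IsOrderIsometricCopy (A : FinOrdMetricSpace) (C : FinOrdMetricSpace) (s : Set C) : Prop :=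
  ∃ e : A ≃ s, (∀ x y : A, dist (e x : C) (e y : C) = dist x y) ∧
    (∀ x y : A, x ≤ y ↔ (e x : C) ≤ (e y : C))


namespace NRam

/-- `Gr a w b`: `w` is a word in which, starting from the alphabet `0,…,a-1`, new letters
appear in increasing order, ending with the alphabet `0,…,b-1`. -/
def Gr : ℕ → List ℕ → ℕ → Prop
  | a, [], b => a = b
  | a, x :: w, b => (x < a ∧ Gr a w b) ∨ (x = a ∧ Gr (a + 1) w b)

/-- Environment given by a word over the alphabet `0,…,a-1`. -/
def ext (a : ℕ) (v : List ℕ) (x : ℕ) : ℕ := if x < a then x else v.getD (x - a) 0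

/-- Substitution of the word `v` for the parameters of the word `W`. -/
def sub (a : ℕ) (v W : List ℕ) : List ℕ := W.map (ext a v)

/-- Shifting of parameters. -/
def shift (a y : ℕ) : ℕ := if y < a then y else y + 1

/-- Instantiating the first parameter. -/
def inst (a x y : ℕ) : ℕ := if y < a then y else if y = a then x else y - 1

theorem Gr.le {a b : ℕ} {w : List ℕ} (h : Gr a w b) : a ≤ b := by
  induction w generalizing a with
  | nil => exact le_of_eq h
  | cons x w ih =>
    rcases h with ⟨_, h⟩ | ⟨_, h⟩
    · exact ih h
    · have := ih h; omega

theorem Gr.append {a b c : ℕ} {u w : List ℕ} (h : Gr a u b) (h' : Gr b w c) :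
    Gr a (u ++ w) c := by
  induction u generalizing a with
  | nil => cases h; exact h'
  | cons x u ih =>
    rcases h with ⟨hx, h⟩ | ⟨hx, h⟩
    · exact Or.inl ⟨hx, ih h⟩
    · exact Or.inr ⟨hx, ih h⟩

theorem Gr.of_lt {a : ℕ} {u : List ℕ} (h : ∀ x ∈ u, x < a) : Gr a u a := by
  induction u with
  | nil => rfl
  | cons x u ih =>
    exact Or.inl ⟨h x (by simp), ih (fun y hy => h y (by simp [hy]))⟩

theorem Gr.of_le {a : ℕ} {u : List ℕ} (h : ∀ x ∈ u, x ≤ a) (ha : a ∈ u) : Gr a u (a + 1) := by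
  induction u with
  | nil => simp at ha
  | cons x u ih =>
    by_cases hx : x = a
    · exact Or.inr ⟨hx, Gr.of_lt (fun y hy => Nat.lt_succ_of_le (h y (by simp [hy])))⟩
    · have hxa := h x (by simp)
      refine Or.inl ⟨by omega, ih (fun y hy => h y (by simp [hy])) ?_⟩
      simp only [List.mem_cons] at ha
      rcases ha with ha | ha
      · exact absurd ha.symm hx
      · exact ha

theorem Gr.lt {a b : ℕ} {w : List ℕ} (h : Gr a w b) : ∀ x ∈ w, x < b := by
  induction w generalizing a with
  | nil => simp
  | cons y w ih =>
    intro x hx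
    simp only [List.mem_cons] at hx
    rcases h with ⟨hy, h⟩ | ⟨hy, h⟩
    · rcases hx with rfl | hx
      · exact lt_of_lt_of_le hy h.le
      · exact ih h x hx
    · rcases hx with rfl | hx
      · have := h.le; omega
      · exact ih h x hx

theorem Gr.shift {a0 a b : ℕ} {w : List ℕ} (h : Gr a w b) (ha : a0 ≤ a) :
    Gr (a + 1) (w.map (shift a0)) (b + 1) := by
  induction w generalizing a with
  | nil => cases h; rfl
  | cons y w ih =>
    rcases h with ⟨hy, h⟩ | ⟨hy, h⟩
    · refine Or.inl ⟨?_, ih h ha⟩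
      unfold NRam.shift; split_ifs <;> omega
    · refine Or.inr ⟨?_, ih h (by omega)⟩
      unfold NRam.shift; split_ifs <;> omega

/-- Splitting a word at the first occurrence of the letter `t`. -/
theorem Gr.split {a b t : ℕ} {w : List ℕ} (h : Gr a w b) (hat : a ≤ t) (htb : t < b) :
    ∃ u r, w = u ++ t :: r ∧ ∀ x ∈ u, x < t := by
  induction w generalizing a with
  | nil => cases h; omega
  | cons y w ih =>
    rcases h with ⟨hy, h⟩ | ⟨hy, h⟩
    · obtain ⟨u, r, rfl, hu⟩ := ih h hat
      refine ⟨y :: u, r, rfl, ?_⟩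
      intro x hx
      simp only [List.mem_cons] at hx
      rcases hx with rfl | hx
      · omega
      · exact hu x hx
    · by_cases hta : t = a
      · exact ⟨[], w, by simp [hy, hta], by simp⟩
      · obtain ⟨u, r, rfl, hu⟩ := ih h (by omega)
        refine ⟨y :: u, r, rfl, ?_⟩
        intro x hx
        simp only [List.mem_cons] at hx
        rcases hx with rfl | hx
        · omega
        · exact hu x hx

theorem Gr.tail {a b : ℕ} {p g : List ℕ} (h : Gr a (p ++ a :: g) b) (hp : ∀ x ∈ p, x < a) :
    Gr (a + 1) g b := by
  induction p with
  | nil =>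
    rcases h with ⟨hy, h⟩ | ⟨hy, h⟩
    · omega
    · exact h
  | cons y p ih =>
    rcases h with ⟨hy, h⟩ | ⟨hy, h⟩
    · exact ih h (fun x hx => hp x (by simp [hx]))
    · have := hp y (by simp); omega

/-- Substitution, in a form suited to induction. -/
theorem Gr.map_env {a b c k : ℕ} {w : List ℕ} {σ : ℕ → ℕ} {v : List ℕ} (h : Gr a w b)
    (hσ : ∀ x < a, σ x < c) (hv : Gr c v k) (hlen : v.length = b - a)
    (hσv : ∀ i, i < v.length → σ (a + i) = v.getD i 0) :
    Gr c (w.map σ) k := by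
  induction w generalizing a c v with
  | nil =>
    cases h
    have : v = [] := by apply List.eq_nil_of_length_eq_zero; omega
    subst this
    exact hv
  | cons y w ih =>
    rcases h with ⟨hy, h⟩ | ⟨hy, h⟩
    · exact Or.inl ⟨hσ y hy, ih h hσ hv hlen hσv⟩
    · subst hy
      have hle := h.le
      cases v with
      | nil => simp at hlen; omega
      | cons z v =>
        have hz : σ y = z := by simpa using hσv 0 (by simp)
        have hσv' : ∀ i, i < v.length → σ (y + 1 + i) = v.getD i 0 := by
          intro i hi
          have := hσv (i + 1) (by simpa using hi)
          rw [show y + 1 + i = y + (i + 1) by omega, this]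
          simp
        simp only [List.length_cons] at hlen
        rcases hv with ⟨hzc, hv⟩ | ⟨hzc, hv⟩
        · refine Or.inl ⟨by omega, ih h ?_ hv (by omega) hσv'⟩
          intro x hx
          rcases Nat.lt_succ_iff_lt_or_eq.mp hx with hx | rfl
          · exact hσ x hx
          · omega
        · refine Or.inr ⟨by omega, ih h ?_ hv (by omega) hσv'⟩
          intro x hx
          rcases Nat.lt_succ_iff_lt_or_eq.mp hx with hx | rfl
          · have := hσ x hx; omega
          · omega

theorem Gr.sub {a m c : ℕ} {W v : List ℕ} (h : Gr a W (a + m)) (hv : Gr a v c)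
    (hlen : v.length = m) : Gr a (sub a v W) c := by
  refine h.map_env (σ := ext a v) ?_ hv (by omega) ?_
  · intro x hx; simp [ext, hx]
  · intro i hi; simp [ext]

theorem ext_zero {a : ℕ} (ha : 1 ≤ a) (v : List ℕ) : ext a v 0 = 0 := by
  unfold ext; rw [if_pos (by omega)]

theorem getD_map0 (f : ℕ → ℕ) (h0 : f 0 = 0) (v : List ℕ) (i : ℕ) :
    (v.map f).getD i 0 = f (v.getD i 0) := by
  rw [← List.getD_map (f := f), h0]

theorem ext_ext {a : ℕ} (ha : 1 ≤ a) (v W : List ℕ) (y : ℕ) :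
    ext a v (ext a W y) = ext a (sub a v W) y := by
  by_cases hy : y < a
  · simp [ext, hy]
  · have h1 : ext a W y = W.getD (y - a) 0 := by simp only [ext, if_neg hy]
    have h2 : ext a (sub a v W) y = (sub a v W).getD (y - a) 0 := by simp only [ext, if_neg hy]
    rw [h1, h2, sub, getD_map0 _ (ext_zero ha v)]

theorem sub_sub {a : ℕ} (ha : 1 ≤ a) (v W U : List ℕ) :
    sub a v (sub a W U) = sub a (sub a v W) U := by
  unfold sub
  rw [List.map_map]
  apply List.map_congr_left
  intro y _
  exact ext_ext ha v W y

theorem length_sub (a : ℕ) (v W : List ℕ) : (sub a v W).length = W.length := by simp [sub]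

theorem ext_cons_self (a : ℕ) (g : List ℕ) (y : ℕ) : ext a (a :: g) y = ext (a + 1) g y := by
  unfold ext
  rcases lt_trichotomy y a with h | h | h
  · rw [if_pos h, if_pos (by omega)]
  · subst h; simp
  · rw [if_neg (by omega), if_neg (by omega), show y - a = (y - (a + 1)) + 1 by omega]
    simp

theorem ext_cons_shift (a x : ℕ) (v : List ℕ) (y : ℕ) :
    ext a (x :: v) (shift a y) = ext a v y := by
  unfold ext shift
  by_cases h : y < a
  · simp [h]
  · simp only [if_neg h]
    rw [if_neg (by omega), show y + 1 - a = (y - a) + 1 by omega]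
    simp

/-- Homogenizing colorings of prefixes: multidimensional Hales–Jewett. -/
theorem S2 (M : ℕ) : ∀ (a : ℕ) (_ : 1 ≤ a) (κ : Type) [Finite κ], ∃ n, ∀ ψ : List ℕ → κ,
    ∃ W : List ℕ, W.length = n ∧ Gr a W (a + M) ∧ ∃ c : ℕ → κ, ∀ p : List ℕ,
      (∀ x ∈ p, x < a) → p.length ≤ M →
        ψ (sub a p (W.takeWhile (fun y => decide (y < a + p.length)))) = c p.length := by
  induction M with
  | zero =>
    intro a ha κ _
    refine ⟨0, fun ψ => ⟨[], rfl, rfl, fun _ => ψ [], ?_⟩⟩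
    intro p _ _
    simp [sub]
  | succ M ih =>
    intro a ha κ _
    obtain ⟨ι, _, hι⟩ := Combinatorics.Line.exists_mono_in_high_dimension (Fin a) (Fin (M + 1) → κ)
    obtain ⟨n', hn'⟩ := ih a ha ((ι → Fin a) → κ)
    let E : List ι := Finset.univ.toList
    let tl : (ι → Fin a) → List ℕ := fun y => E.map (fun i => (y i : ℕ))
    refine ⟨E.length + n', fun ψ => ?_⟩
    obtain ⟨W', hlen, hGr, c', hc'⟩ := hn' (fun z y => ψ (tl y ++ z))
    obtain ⟨l, col, hl⟩ := hι (fun y i => c' i y)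
    let Lt : List ℕ := E.map (fun i => ((l.idxFun i).map (fun x : Fin a => (x : ℕ))).getD a)
    have hLt_le : ∀ x ∈ Lt, x ≤ a := by
      intro x hx
      obtain ⟨i, _, rfl⟩ := List.mem_map.mp hx
      cases h : l.idxFun i with
      | none => simp
      | some z => simp
    have hLt_mem : a ∈ Lt := by
      obtain ⟨i, hi⟩ := l.proper
      refine List.mem_map.mpr ⟨i, by simp [E], by simp [hi]⟩
    have hLt_sub : ∀ (x : Fin a) (p : List ℕ), sub a ((x : ℕ) :: p) Lt = tl (l x) := by
      intro x p
      simp only [sub, Lt, tl, List.map_map]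
      apply List.map_congr_left
      intro i _
      cases h : l.idxFun i with
      | none => simp [h, ext, Combinatorics.Line.coe_apply]
      | some z => simp [h, ext, Combinatorics.Line.coe_apply]
    refine ⟨Lt ++ W'.map (shift a), by simp [Lt, hlen], ?_, ?_⟩
    · have h1 := Gr.of_le hLt_le hLt_mem
      have h2 := hGr.shift (le_refl a)
      have := h1.append h2
      rwa [show a + (M + 1) = a + M + 1 by omega]
    · refine ⟨fun j => if h : 1 ≤ j ∧ j ≤ M + 1 then col ⟨j - 1, by omega⟩ else
        ψ (sub a [] ((Lt ++ W'.map (shift a)).takeWhile (fun y => decide (y < a + 0)))), ?_⟩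
      intro p hp hpM
      cases p with
      | nil => simp
      | cons x p =>
        have hpM' : p.length ≤ M := by simpa using hpM
        have hx : x < a := hp x (by simp)
        have htw : (Lt ++ W'.map (shift a)).takeWhile
              (fun y => decide (y < a + (x :: p).length))
            = Lt ++ (W'.takeWhile (fun y => decide (y < a + p.length))).map (shift a) := by
          rw [List.takeWhile_append_of_pos]
          · congr 1
            rw [List.takeWhile_map]
            congr 2
            funext y
            simp only [Function.comp, List.length_cons, shift]
            by_cases hy : y < a
            · simp [hy]; omega
            · simp [hy]; omega
          · intro y hy
            have := hLt_le y hy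
            simp only [List.length_cons, decide_eq_true_eq]
            omega
        have hsub : sub a (x :: p) (Lt ++
              (W'.takeWhile (fun y => decide (y < a + p.length))).map (shift a))
            = tl (l ⟨x, hx⟩) ++ sub a p (W'.takeWhile (fun y => decide (y < a + p.length))) := by
          rw [← hLt_sub ⟨x, hx⟩ p]
          simp only [sub, List.map_append, List.map_map]
          congr 1
          apply List.map_congr_left
          intro y _
          exact ext_cons_shift a x p y
        rw [htw, hsub]
        have h1 := congrFun (hc' p (fun y hy => hp y (by simp [hy])) hpM') (l ⟨x, hx⟩)
        rw [h1]
        have h2 := congrFun (hl ⟨x, hx⟩) ⟨p.length, by omega⟩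
        simp only at h2
        rw [h2]
        have hcond : 1 ≤ (x :: p).length ∧ (x :: p).length ≤ M + 1 := ⟨by simp, hpM⟩
        beta_reduce
        rw [dif_pos hcond]
        rfl

/-- The Graham–Rothschild statement for `d` parameters. -/
def P (d : ℕ) : Prop := ∀ (a m : ℕ) (_ : 1 ≤ a) (κ : Type) [Finite κ], ∃ n, ∀ χ : List ℕ → κ,
  ∃ W : List ℕ, W.length = n ∧ Gr a W (a + m) ∧ ∃ col : κ, ∀ v : List ℕ, v.length = m →
    Gr a v (a + d) → χ (sub a v W) = col

theorem P_zero : P 0 := by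
  intro a m ha κ _
  obtain ⟨n, hn⟩ := S2 m a ha κ
  refine ⟨n, fun χ => ?_⟩
  obtain ⟨W, hlen, hGr, c, hc⟩ := hn χ
  refine ⟨W, hlen, hGr, c m, ?_⟩
  intro v hv hvG
  have := hc v (by simpa using hvG.lt) hv.le
  rw [List.takeWhile_eq_self_iff.mpr, hv] at this
  · exact this
  · intro x hx
    have := hGr.lt x hx
    simp; omega

/-- Making the color depend only on the prefix before the first parameter. -/
theorem S1 {d : ℕ} (hP : P d) (M : ℕ) : ∀ (a : ℕ) (_ : 1 ≤ a) (κ : Type) [Finite κ], ∃ n,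
    ∀ χ : List ℕ → κ, ∃ W : List ℕ, W.length = n ∧ Gr a W (a + M) ∧ ∃ ψ : List ℕ → κ,
      ∀ p g : List ℕ, (∀ x ∈ p, x < a) → (p ++ a :: g).length = M → Gr (a + 1) g (a + 1 + d) →
        χ (sub a (p ++ a :: g) W) = ψ p := by
  induction M with
  | zero =>
    intro a ha κ _
    refine ⟨0, fun χ => ⟨[], rfl, rfl, fun _ => χ [], ?_⟩⟩
    intro p g _ h
    simp at h
  | succ M ih =>
    intro a ha κ _
    obtain ⟨m1, h1⟩ := ih a ha (Fin a → κ)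
    obtain ⟨n1, hn1⟩ := hP (a + 1) m1 (by omega) κ
    refine ⟨n1 + 1, fun χ => ?_⟩
    obtain ⟨U, hUlen, hUG, col0, hcol0⟩ := hn1 (fun g => χ (a :: g))
    obtain ⟨W', hWlen, hWG, ψ1, hψ1⟩ := h1 (fun v x => χ ((x : ℕ) :: sub a v (U.map (inst a x))))
    have hWs := hWG.shift (le_refl a)
    refine ⟨a :: sub (a + 1) (W'.map (shift a)) U, by simp [length_sub, hUlen], ?_, ?_⟩
    · refine Or.inr ⟨rfl, ?_⟩
      refine hUG.sub (c := a + (M + 1)) hWs (by simp [hWlen])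
    · refine ⟨fun p => match p with
        | [] => col0
        | x :: p => if h : x < a then ψ1 p ⟨x, h⟩ else col0, ?_⟩
      intro p g hp hlen hg
      cases p with
      | nil =>
        simp only [List.nil_append, List.length_cons] at hlen
        have e : sub a ([] ++ a :: g) (a :: sub (a + 1) (W'.map (shift a)) U)
            = a :: sub (a + 1) (sub (a + 1) g (W'.map (shift a))) U := by
          rw [← sub_sub (by omega)]
          have : sub a (a :: g) = sub (a + 1) g := by
            funext w; unfold sub; apply List.map_congr_left
            intro y _; exact ext_cons_self a g y
          simp only [List.nil_append]
          rw [this]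
          simp [sub, ext]
        rw [e]
        refine hcol0 _ (by simp [length_sub, hWlen]) ?_
        refine Gr.sub (m := M) ?_ hg (by omega)
        rwa [show a + 1 + M = a + M + 1 by omega]
      | cons x p =>
        have hx := hp x (by simp)
        simp only [List.cons_append, List.length_cons] at hlen ⊢
        rw [dif_pos hx]
        have e : sub a (x :: (p ++ a :: g)) (a :: sub (a + 1) (W'.map (shift a)) U)
            = x :: sub a (sub a (p ++ a :: g) W') (U.map (inst a x)) := by
          have e1 : sub a (x :: (p ++ a :: g)) (sub (a + 1) (W'.map (shift a)) U)
              = sub a (sub a (p ++ a :: g) W') (U.map (inst a x)) := by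
            generalize p ++ a :: g = v'
            rw [← sub_sub ha]
            simp only [sub, List.map_map]
            apply List.map_congr_left
            intro y _
            simp only [Function.comp]
            rcases lt_trichotomy y a with h | h | h
            · have h' : y < a + 1 := by omega
              simp [ext, inst, h, h']
            · subst h; simp [ext, inst, hx]
            · have e2 : ext (a + 1) (W'.map (shift a)) y = shift a (ext a W' (inst a x y)) := by
                have e3 : inst a x y = y - 1 := by
                  unfold inst; rw [if_neg (by omega), if_neg (by omega)]
                rw [e3]
                unfold ext
                rw [if_neg (by omega), if_neg (by omega),
                  getD_map0 _ (by unfold shift; rw [if_pos (by omega)])]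
                congr 2
                omega
              rw [e2, ext_cons_shift]
          rw [← e1]
          simp [sub, ext]
        rw [e]
        exact congrFun (hψ1 p g (fun y hy => hp y (by simp [hy])) (by simpa using hlen) hg)
          ⟨x, hx⟩

theorem pick {a m : ℕ} (ha : 1 ≤ a) (p : ℕ → Prop) [DecidablePred p] (l : List ℕ)
    (h : m ≤ l.countP (fun x => decide (p x))) :
    ∃ W : List ℕ, W.length = l.length ∧ Gr a W (a + m) ∧
      ∀ i, W.getD i 0 ≠ 0 → p (l.getD i 0) := by
  induction l generalizing a m with
  | nil =>
    have : m = 0 := by simpa using h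
    subst this
    exact ⟨[], rfl, rfl, by simp⟩
  | cons x l ih =>
    by_cases hx : p x ∧ 1 ≤ m
    · obtain ⟨W, h1, h2, h3⟩ := ih (a := a + 1) (m := m - 1) (by omega) (by
        rw [List.countP_cons_of_pos (by simpa using hx.1)] at h; omega)
      refine ⟨a :: W, by simp [h1], Or.inr ⟨rfl, ?_⟩, ?_⟩
      · rwa [show a + m = a + 1 + (m - 1) by omega]
      · intro i hi
        cases i with
        | zero => simpa using hx.1
        | succ i => simpa using h3 i (by simpa using hi)
    · obtain ⟨W, h1, h2, h3⟩ := ih (a := a) (m := m) ha (by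
        by_cases hpx : p x
        · have : m = 0 := by
            by_contra hm; exact hx ⟨hpx, by omega⟩
          omega
        · rwa [List.countP_cons_of_neg (by simpa using hpx)] at h)
      refine ⟨0 :: W, by simp [h1], Or.inl ⟨by omega, h2⟩, ?_⟩
      intro i hi
      cases i with
      | zero => simp at hi
      | succ i => simpa using h3 i (by simpa using hi)

theorem pigeon (κ : Type) [Finite κ] (m : ℕ) : ∃ L, ∀ c : ℕ → κ, ∃ col : κ, ∀ a, 1 ≤ a →
    ∃ W : List ℕ, W.length = L ∧ Gr a W (a + m) ∧ ∀ i, i < L → W.getD i 0 ≠ 0 → c i = col := by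
  classical
  have := Fintype.ofFinite κ
  refine ⟨Fintype.card κ * m + 1, fun c => ?_⟩
  obtain ⟨col, _, hcol⟩ := Finset.exists_le_card_fiber_of_mul_le_card_of_maps_to
    (s := Finset.range (Fintype.card κ * m + 1)) (t := (Finset.univ : Finset κ)) (f := c) (n := m)
    (by simp) ⟨c 0, by simp⟩ (by simp)
  refine ⟨col, fun a ha => ?_⟩
  obtain ⟨W, h1, h2, h3⟩ := pick (m := m) ha (fun i => c i = col)
    (List.range (Fintype.card κ * m + 1)) (by
      refine hcol.trans (le_of_eq ?_)
      rw [List.countP_eq_length_filter]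
      rfl)
  refine ⟨W, by simpa using h1, h2, ?_⟩
  intro i hi hne
  have := h3 i hne
  rw [List.getD_eq_getElem _ _ (by simpa using hi)] at this
  simpa using this

theorem P_succ {d : ℕ} (hP : P d) : P (d + 1) := by
  intro a m ha κ _
  obtain ⟨L, hL⟩ := pigeon κ m
  obtain ⟨n2, hn2⟩ := S2 L a ha κ
  obtain ⟨n, hn⟩ := S1 hP n2 a ha κ
  refine ⟨n, fun χ => ?_⟩
  obtain ⟨W1, hl1, hG1, ψ1, hψ1⟩ := hn χ
  obtain ⟨W2, hl2, hG2, c, hc⟩ := hn2 ψ1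
  obtain ⟨col, hcol⟩ := hL c
  obtain ⟨W3, hl3, hG3, hW3⟩ := hcol a ha
  refine ⟨sub a (sub a W3 W2) W1, by simp [length_sub, hl1], ?_, col, ?_⟩
  · exact hG1.sub (hG2.sub hG3 hl3) (by simp [length_sub, hl2])
  · intro v hvl hvG
    rw [sub_sub ha, sub_sub ha]
    have hv3G : Gr a (sub a v W3) (a + (d + 1)) := hG3.sub hvG hvl
    have hv3l : (sub a v W3).length = L := by rw [length_sub, hl3]
    obtain ⟨p3, g3, he3, hp3⟩ := hv3G.split (le_refl a) (by omega)
    have hpl : p3.length < L := by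
      rw [← hv3l, he3]; simp
    have hci : c p3.length = col := by
      apply hW3 _ hpl
      intro h0
      have h1 : (sub a v W3).getD p3.length 0 = a := by rw [he3]; simp
      rw [sub, getD_map0 _ (ext_zero ha v), h0, ext_zero ha] at h1
      omega
    obtain ⟨u, r, he2, hu⟩ := hG2.split (t := a + p3.length) (by omega) (by omega)
    have hv2G : Gr a (sub a (sub a v W3) W2) (a + (d + 1)) := hG2.sub hv3G hv3l
    have hv2l : (sub a (sub a v W3) W2).length = n2 := by rw [length_sub, hl2]
    have hext : ∀ y < a + p3.length, ext a (p3 ++ a :: g3) y = ext a p3 y := by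
      intro y hy
      unfold ext
      split_ifs with h
      · rfl
      · rw [List.getD_append _ _ _ _ (by omega)]
    have hsplit : sub a (sub a v W3) W2 = sub a p3 u ++ a :: sub a (sub a v W3) r := by
      rw [he3, he2]
      simp only [sub, List.map_append, List.map_cons]
      congr 1
      · apply List.map_congr_left
        intro y hy; exact hext y (hu y hy)
      · congr 1
        simp [ext]
    have hps : ∀ x ∈ sub a p3 u, x < a := by
      intro x hx
      obtain ⟨y, hy, rfl⟩ := List.mem_map.mp hx
      have := hu y hy
      unfold ext
      split_ifs with h
      · exact h
      · rw [List.getD_eq_getElem _ _ (by omega)]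
        exact hp3 _ (List.getElem_mem _)
    have htw : W2.takeWhile (fun y => decide (y < a + p3.length)) = u := by
      rw [he2, List.takeWhile_append_of_pos (by simpa using hu)]
      simp
    have hfin := hc p3 hp3 hpl.le
    rw [htw, hci] at hfin
    rw [hsplit] at hv2G hv2l ⊢
    rw [hψ1 _ _ hps hv2l, hfin]
    have := hv2G.tail hps
    rwa [show a + 1 + d = a + (d + 1) by omega]

theorem P_all (d : ℕ) : P d := by
  induction d with
  | zero => exact P_zero
  | succ d ih => exact P_succ ih

end NRam
namespace NRam

theorem Gr.rigid {a b : ℕ} {l : List ℕ} (h : Gr a l b) : ∀ i, i < l.length → ∀ y, a ≤ y →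
    y < l.getD i 0 → ∃ j, j < i ∧ l.getD j 0 = y := by
  induction l generalizing a with
  | nil => intro i hi; simp at hi
  | cons x w ih =>
    intro i hi y hay hy
    cases i with
    | zero =>
      simp at hy
      rcases h with ⟨hx, _⟩ | ⟨hx, _⟩ <;> omega
    | succ i =>
      simp only [List.length_cons, List.getD_cons_succ] at hi hy
      rcases h with ⟨hx, h⟩ | ⟨hx, h⟩
      · obtain ⟨j, hj, e⟩ := ih h i (by omega) y hay hy
        exact ⟨j + 1, by omega, by simpa using e⟩
      · by_cases hya : y = a
        · exact ⟨0, by omega, by simp [hx, hya]⟩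
        · obtain ⟨j, hj, e⟩ := ih h i (by omega) y (by omega) hy
          exact ⟨j + 1, by omega, by simpa using e⟩

theorem Gr.of_rigid {b : ℕ} (l : List ℕ) : ∀ a, a ≤ b → (∀ x ∈ l, x < b) →
    (∀ y, a ≤ y → y < b → y ∈ l) →
    (∀ i, i < l.length → ∀ y, a ≤ y → y < l.getD i 0 → ∃ j, j < i ∧ l.getD j 0 = y) →
    Gr a l b := by
  induction l with
  | nil =>
    intro a hab _ h _
    by_contra hne
    have : a ≠ b := fun e => hne e
    have := h a le_rfl (by omega)
    simp at this
  | cons x w ih =>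
    intro a hab hlt hmem hr
    have hxa : x ≤ a := by
      by_contra hx
      obtain ⟨j, hj, _⟩ := hr 0 (by simp) a le_rfl (by simpa using hx)
      omega
    have key : ∀ a', a ≤ a' → x < a' → a' ≤ b → Gr a' w b := by
      intro a' ha hx hb
      refine ih a' hb (fun z hz => hlt z (by simp [hz])) ?_ ?_
      · intro y hy hyb
        have := hmem y (by omega) hyb
        simp only [List.mem_cons] at this
        rcases this with h | h
        · omega
        · exact h
      · intro i hi y hy hyi
        obtain ⟨j, hj, e⟩ := hr (i + 1) (by simpa using hi) y (by omega) (by simpa using hyi)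
        cases j with
        | zero => simp at e; omega
        | succ j => exact ⟨j, by omega, by simpa using e⟩
    rcases Nat.lt_or_eq_of_le hxa with h | h
    · exact Or.inl ⟨h, key a le_rfl h hab⟩
    · have := hlt x (by simp)
      exact Or.inr ⟨h, key (a + 1) (by omega) (by omega) (by omega)⟩

/-- Rigid surjections between linear orders. -/
def Rigid {X Y : Type} [LT X] [LT Y] (f : X → Y) : Prop :=
  Function.Surjective f ∧ ∀ x y, y < f x → ∃ z, z < x ∧ f z = y

/-- The finite dual Ramsey theorem. -/
theorem dualRamsey (P Q κ : Type) [LinearOrder P] [Fintype P] [Nonempty P]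
    [LinearOrder Q] [Fintype Q] [Nonempty Q] [Finite κ] :
    ∃ n, ∀ χ : (Fin n → P) → κ, ∃ w : Fin n → Q, Rigid w ∧ ∃ col, ∀ r : Q → P, Rigid r →
      χ (fun i => r (w i)) = col := by
  classical
  obtain ⟨p, hp⟩ : ∃ p, Fintype.card P = p := ⟨_, rfl⟩
  obtain ⟨q, hq⟩ : ∃ q, Fintype.card Q = q := ⟨_, rfl⟩
  have hp0 : 0 < p := hp ▸ Fintype.card_pos
  have hq0 : 0 < q := hq ▸ Fintype.card_pos
  let eP : Fin p ≃o P := Fintype.orderIsoFinOfCardEq P hp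
  let eQ : Fin q ≃o Q := Fintype.orderIsoFinOfCardEq Q hq
  let dP : ℕ → P := fun k => if h : k < p then eP ⟨k, h⟩ else Classical.arbitrary P
  obtain ⟨n0, hn0⟩ := P_all (p - 1) 1 (q - 1) le_rfl κ
  refine ⟨n0 + 1, fun χ => ?_⟩
  obtain ⟨W, hlen, hG, col, hcol⟩ := hn0 (fun l => χ (fun i => dP ((0 :: l).getD i 0)))
  rw [show 1 + (q - 1) = q by omega] at hG
  have hG0 : Gr 0 (0 :: W) q := Or.inr ⟨rfl, hG⟩
  have hbd : ∀ i : Fin (n0 + 1), (0 :: W).getD i 0 < q := by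
    intro i
    have hi : (i : ℕ) < (0 :: W).length := by simp [hlen]; omega
    rw [List.getD_eq_getElem _ _ hi]
    exact hG0.lt _ (List.getElem_mem _)
  refine ⟨fun i => eQ ⟨(0 :: W).getD i 0, hbd i⟩, ⟨?_, ?_⟩, col, ?_⟩
  · intro y
    obtain ⟨k, rfl⟩ := eQ.surjective y
    obtain ⟨u, r, he, _⟩ := hG0.split (Nat.zero_le k) k.2
    have hlen' : u.length < n0 + 1 := by
      have : (0 :: W).length = n0 + 1 := by simp [hlen]
      rw [← this, he]; simp
    refine ⟨⟨u.length, hlen'⟩, ?_⟩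
    refine congrArg eQ (Fin.ext ?_)
    simp [he]
  · intro x y hy
    obtain ⟨k, rfl⟩ := eQ.surjective y
    have hk : k < ⟨(0 :: W).getD x 0, hbd x⟩ := eQ.lt_iff_lt.mp hy
    obtain ⟨j, hj, e⟩ := hG0.rigid x (by simp [hlen]; omega) k (Nat.zero_le _) hk
    refine ⟨⟨j, by omega⟩, hj, ?_⟩
    exact congrArg eQ (Fin.ext e)
  · intro r hr
    let ρ : Fin q → Fin p := fun i => eP.symm (r (eQ i))
    let vh : List ℕ := List.ofFn (fun i => (ρ i : ℕ))
    have hvl : vh.length = q := by simp [vh]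
    have hget : ∀ i (hi : i < q), vh.getD i 0 = ρ ⟨i, hi⟩ := by
      intro i hi
      rw [List.getD_eq_getElem _ _ (by omega)]
      simp [vh]
    have hGv : Gr 0 vh p := by
      refine Gr.of_rigid vh 0 (by omega) ?_ ?_ ?_
      · intro x hx
        obtain ⟨i, rfl⟩ := (List.mem_ofFn' _ _).mp hx
        exact (ρ i).2
      · intro y _ hy
        obtain ⟨z, hz⟩ := hr.1 (eP ⟨y, hy⟩)
        refine (List.mem_ofFn' _ _).mpr ⟨eQ.symm z, ?_⟩
        simp [ρ, hz]
      · intro i hi y _ hy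
        have hi' : i < q := by omega
        rw [hget i hi'] at hy
        have hyp : y < p := hy.trans (ρ ⟨i, hi'⟩).2
        have h1 : eP ⟨y, hyp⟩ < r (eQ ⟨i, hi'⟩) := by
          rw [← eP.lt_symm_apply]
          exact hy
        obtain ⟨x', hx', e⟩ := hr.2 _ _ h1
        obtain ⟨k, rfl⟩ := eQ.surjective x'
        have hk := eQ.lt_iff_lt.mp hx'
        refine ⟨k, hk, ?_⟩
        rw [hget k k.2]
        simp [ρ, e]
    have hcons : ∃ v, vh = 0 :: v ∧ Gr 1 v p := by
      cases hv : vh with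
      | nil => rw [hv] at hvl; simp at hvl; omega
      | cons z v =>
        rw [hv] at hGv
        rcases hGv with ⟨h, _⟩ | ⟨h, h'⟩
        · omega
        · exact ⟨v, by rw [h], h'⟩
    obtain ⟨v, hv, hGv1⟩ := hcons
    have := hcol v (by rw [hv] at hvl; simp at hvl; omega)
      (by rwa [show 1 + (p - 1) = p by omega])
    rw [← this]
    congr 1
    funext i
    have e0 : 0 :: sub 1 v W = (0 :: W).map (ext 1 v) := by simp [sub, ext]
    have e1 : ∀ k, ext 1 v k = vh.getD k 0 := by
      intro k
      rw [hv]
      cases k with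
      | zero => simp [ext]
      | succ k => simp [ext]
    rw [e0, getD_map0 _ (ext_zero le_rfl v), e1, hget _ (hbd i)]
    simp [dP, ρ]

/-! ### Metric part -/

theorem exists_values_aux (S : Finset ℝ) (δ : ℝ) (hδ : 0 < δ) (hS : ∀ s ∈ S, δ ≤ s) (j : ℕ) :
    ∀ K : ℝ, 0 ≤ K → K ≤ j * δ → ∃ V : Finset ℝ, (0 : ℝ) ∈ V ∧ K ∈ V ∧ (∀ v ∈ V, 0 ≤ v) ∧
      ∀ v ∈ V, ∀ s ∈ S, max 0 (v - s) ∈ V := by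
  classical
  induction j with
  | zero =>
    intro K h0 h1
    have : K = 0 := by simp at h1; linarith
    subst this
    refine ⟨{0}, by simp, by simp, by simp, ?_⟩
    intro v hv s hs
    have := hS s hs
    simp only [Finset.mem_singleton] at hv ⊢
    subst hv
    exact max_eq_left (by linarith)
  | succ j ih =>
    intro K h0 h1
    have : ∀ s : ℝ, ∃ V : Finset ℝ, s ∈ S → ((0 : ℝ) ∈ V ∧ max 0 (K - s) ∈ V ∧
        (∀ v ∈ V, 0 ≤ v) ∧ ∀ v ∈ V, ∀ s ∈ S, max 0 (v - s) ∈ V) := by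
      intro s
      by_cases hs : s ∈ S
      · obtain ⟨V, hV⟩ := ih (max 0 (K - s)) (le_max_left _ _) (by
          have := hS s hs
          push_cast at h1
          refine max_le (by positivity) (by linarith))
        exact ⟨V, fun _ => hV⟩
      · exact ⟨∅, fun h => absurd h hs⟩
    choose V hV using this
    refine ⟨insert 0 (insert K (S.biUnion V)), by simp, by simp, ?_, ?_⟩
    · intro v hv
      simp only [Finset.mem_insert, Finset.mem_biUnion] at hv
      rcases hv with rfl | rfl | ⟨s, hs, hv⟩
      · exact le_rfl
      · exact h0
      · exact (hV s hs).2.2.1 v hv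
    · intro v hv s hs
      simp only [Finset.mem_insert, Finset.mem_biUnion] at hv ⊢
      have hsp := hS s hs
      rcases hv with rfl | rfl | ⟨s', hs', hv⟩
      · left; exact max_eq_left (by linarith)
      · right; right; exact ⟨s, hs, (hV s hs).2.1⟩
      · right; right; exact ⟨s', hs', (hV s' hs').2.2.2 v hv s hs⟩

theorem exists_values (S : Finset ℝ) (hS : ∀ s ∈ S, 0 < s) (K : ℝ) (hK : 0 ≤ K) :
    ∃ V : Finset ℝ, (0 : ℝ) ∈ V ∧ K ∈ V ∧ (∀ v ∈ V, 0 ≤ v) ∧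
      ∀ v ∈ V, ∀ s ∈ S, max 0 (v - s) ∈ V := by
  classical
  obtain ⟨δ, hδ, hδS⟩ : ∃ δ : ℝ, 0 < δ ∧ ∀ s ∈ S, δ ≤ s := by
    by_cases hne : S.Nonempty
    · exact ⟨S.min' hne, hS _ (S.min'_mem hne), fun s hs => S.min'_le s hs⟩
    · rw [Finset.not_nonempty_iff_eq_empty] at hne
      exact ⟨1, one_pos, by simp [hne]⟩
  obtain ⟨j, hj⟩ := exists_nat_ge (K / δ)
  exact exists_values_aux S δ hδ hδS j K hK (by rwa [div_le_iff₀ hδ] at hj)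

/-- `1`-Lipschitz functions with values in `V`. -/
@[ext]
structure Lip (V : Finset ℝ) (M : Type) [MetricSpace M] : Type where
  /-- the underlying function -/
  val : M → V
  /-- the Lipschitz condition -/
  lip : ∀ x y, (val x : ℝ) ≤ val y + dist x y

/-- Restriction along an isometry. -/
def restr {V : Finset ℝ} {A B : Type} [MetricSpace A] [MetricSpace B] (f : A → B)
    (hd : ∀ x y, dist (f x) (f y) = dist x y) (ψ : Lip V B) : Lip V A :=
  ⟨fun a => ψ.1 (f a), fun x y => by rw [← hd]; exact ψ.2 _ _⟩

section
variable {V : Finset ℝ} {M : Type} [MetricSpace M] [LinearOrder M] [Fintype M]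

noncomputable instance : Fintype (Lip V M) := by
  classical
  exact Fintype.ofInjective (fun φ : Lip V M => φ.1) (fun _ _ h => Lip.ext h)

open Classical in
/-- The hypograph of a function. -/
noncomputable def key (φ : Lip V M) : Finset (V ×ₗ M) :=
  Finset.univ.filter (fun p => (ofLex p).1 ≤ φ.1 (ofLex p).2)

theorem mem_key (φ : Lip V M) (t : V) (m : M) : toLex (t, m) ∈ key φ ↔ t ≤ φ.1 m := by
  simp [key]

theorem key_injective : Function.Injective (fun φ : Lip V M => toColex (key φ)) := by
  intro φ ψ h
  have h : key φ = key ψ := toColex.injective h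
  apply Lip.ext
  funext m
  apply le_antisymm
  · rw [← mem_key, ← h, mem_key]
  · rw [← mem_key, h, mem_key]

noncomputable instance : LinearOrder (Lip V M) :=
  LinearOrder.lift' (fun φ : Lip V M => toColex (key φ)) key_injective

theorem lip_le_iff (φ ψ : Lip V M) : φ ≤ ψ ↔ ∀ t m, t ≤ φ.1 m → ψ.1 m < t →
    ∃ t' m', t' ≤ ψ.1 m' ∧ φ.1 m' < t' ∧ toLex (t, m) ≤ toLex (t', m') := by
  change toColex (key φ) ≤ toColex (key ψ) ↔ _
  rw [Finset.Colex.toColex_le_toColex]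
  constructor
  · intro h t m h1 h2
    obtain ⟨b, hb1, hb2, hb3⟩ := h ((mem_key φ t m).mpr h1)
      (fun h3 => absurd ((mem_key ψ t m).mp h3) (not_le.mpr h2))
    refine ⟨(ofLex b).1, (ofLex b).2, (mem_key ψ _ _).mp hb1, ?_, hb3⟩
    exact not_le.mp (fun h3 => hb2 ((mem_key φ _ _).mpr h3))
  · intro h a ha1 ha2
    obtain ⟨t', m', h1, h2, h3⟩ := h (ofLex a).1 (ofLex a).2 ((mem_key φ _ _).mp ha1)
      (not_le.mp (fun h3 => ha2 ((mem_key ψ _ _).mpr h3)))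
    exact ⟨toLex (t', m'), (mem_key ψ _ _).mpr h1,
      fun h4 => absurd ((mem_key φ _ _).mp h4) (not_le.mpr h2), h3⟩

/-- Minimal extension along an embedding; this makes restriction a rigid surjection. -/
theorem restrict_rigid {A B : Type} [MetricSpace A] [LinearOrder A] [Fintype A]
    [MetricSpace B] [LinearOrder B] [Fintype B] (f : A → B)
    (hd : ∀ x y, dist (f x) (f y) = dist x y) (hm : Monotone f)
    (h0 : (0 : ℝ) ∈ V) (hV : ∀ v ∈ V, 0 ≤ v)
    (hB : ∀ x y : B, ∀ v ∈ V, max 0 (v - dist x y) ∈ V) :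
    Rigid (restr (V := V) f hd) := by
  classical
  have main : ∀ φ : Lip V A, ∃ g : Lip V B, (∀ a, g.1 (f a) = φ.1 a) ∧
      ∀ b, (g.1 b : ℝ) = 0 ∨ ∃ a, (g.1 b : ℝ) = φ.1 a - dist (f a) b := by
    intro φ
    have h1 : ∀ b, ∃ v : V, (∀ a, (φ.1 a : ℝ) - dist (f a) b ≤ v) ∧
        ((v : ℝ) = 0 ∨ ∃ a, (v : ℝ) = φ.1 a - dist (f a) b) := by
      intro b
      let T : Finset ℝ := insert 0 (Finset.univ.image
        (fun a => max 0 ((φ.1 a : ℝ) - dist (f a) b)))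
      have hT : T.Nonempty := ⟨0, by simp [T]⟩
      have hmem := T.max'_mem hT
      have hTV : ∀ v ∈ T, v ∈ V := by
        intro v hv
        simp only [T, Finset.mem_insert, Finset.mem_image, Finset.mem_univ, true_and] at hv
        rcases hv with rfl | ⟨a, rfl⟩
        · exact h0
        · exact hB _ _ _ (φ.1 a).2
      refine ⟨⟨T.max' hT, hTV _ hmem⟩, ?_, ?_⟩
      · intro a
        refine (le_max_right 0 _).trans (T.le_max' _ ?_)
        simp only [T, Finset.mem_insert, Finset.mem_image, Finset.mem_univ, true_and]
        exact Or.inr ⟨a, rfl⟩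
      · simp only
        generalize T.max' hT = z at hmem
        simp only [T, Finset.mem_insert, Finset.mem_image, Finset.mem_univ, true_and] at hmem
        rcases hmem with h | ⟨a, rfl⟩
        · exact Or.inl h
        · rcases max_choice 0 ((φ.1 a : ℝ) - dist (f a) b) with h | h
          · exact Or.inl h
          · exact Or.inr ⟨a, h⟩
    choose g hg1 hg2 using h1
    refine ⟨⟨g, ?_⟩, ?_, hg2⟩
    · intro x y
      rcases hg2 x with h | ⟨a, h⟩
      · rw [h]
        have := hV _ (g y).2
        have := dist_nonneg (x := x) (y := y)
        linarith
      · rw [h]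
        have h2 := hg1 y a
        have h3 := dist_triangle (f a) x y
        linarith
    · intro a
      apply le_antisymm
      · change (g (f a) : ℝ) ≤ φ.1 a
        rcases hg2 (f a) with h | ⟨a', h⟩
        · rw [h]; exact hV _ (φ.1 a).2
        · rw [h, hd]
          have := φ.2 a' a
          linarith
      · change (φ.1 a : ℝ) ≤ g (f a)
        have := hg1 (f a) a
        simpa using this
  constructor
  · intro φ
    obtain ⟨g, hg, _⟩ := main φ
    exact ⟨g, Lip.ext (funext hg)⟩
  · intro ψ φ hlt
    obtain ⟨g, hg, hg2⟩ := main φ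
    have hgφ : restr f hd g = φ := Lip.ext (funext hg)
    refine ⟨g, lt_of_le_of_ne ?_ ?_, hgφ⟩
    · rw [lip_le_iff]
      intro s b hs1 hs2
      have hle := (lip_le_iff _ _).mp hlt.le
      have hs1' : (s : ℝ) ≤ g.1 b := hs1
      have hs2' : (ψ.1 b : ℝ) < s := hs2
      rcases hg2 b with h | ⟨a', h⟩
      · have := hV _ (ψ.1 b).2
        linarith
      · have hψ := ψ.2 (f a') b
        obtain ⟨t, a, ht1, ht2, ht3⟩ := hle (φ.1 a') a' le_rfl (by
          change (ψ.1 (f a') : ℝ) < φ.1 a'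
          linarith)
        refine ⟨t, f a, ht1, by rw [hg]; exact ht2, ?_⟩
        have hdn := dist_nonneg (x := f a') (y := b)
        have hsφ : (s : ℝ) ≤ φ.1 a' := by linarith
        rw [Prod.Lex.toLex_le_toLex] at ht3 ⊢
        simp only at ht3 ⊢
        rcases ht3 with ht3 | ⟨ht3, ht4⟩
        · exact Or.inl (lt_of_le_of_lt hsφ ht3)
        · rcases lt_or_eq_of_le hsφ with h5 | h5
          · left; rw [← ht3]; exact h5
          · right
            refine ⟨(Subtype.ext h5).trans ht3, ?_⟩
            have : dist (f a') b = 0 := by linarith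
            rw [← dist_eq_zero.mp this]
            exact hm ht4
    · rintro rfl
      rw [hgφ] at hlt
      exact lt_irrefl _ hlt

theorem phi_lt {n : ℕ} (w : Fin n → Lip V M) (hw : Rigid w)
    (h0 : (0 : ℝ) ∈ V) (hV : ∀ v ∈ V, 0 ≤ v) (hpos : ∃ v ∈ V, 0 < v)
    (hM : ∀ x y : M, ∀ v ∈ V, max 0 (v - dist x y) ∈ V) {m m' : M} (hmm : m < m') :
    ∃ x, (∀ x', x' < x → (w x').1 m = (w x').1 m') ∧ ((w x).1 m' : ℝ) < (w x).1 m := by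
  classical
  obtain ⟨t, htV, ht0, htmin⟩ : ∃ t ∈ V, 0 < t ∧ ∀ v ∈ V, 0 < v → t ≤ v := by
    have hne : (V.filter (fun v => 0 < v)).Nonempty := by
      obtain ⟨v, h1, h2⟩ := hpos
      exact ⟨v, by simp [h1, h2]⟩
    have h := (V.filter (fun v => 0 < v)).min'_mem hne
    rw [Finset.mem_filter] at h
    exact ⟨_, h.1, h.2, fun v h1 h2 => Finset.min'_le _ _ (by simp [h1, h2])⟩
  have htd : ∀ x y : M, x ≠ y → t ≤ dist x y := by
    intro x y hxy
    have hd := dist_pos.mpr hxy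
    by_contra hlt
    push Not at hlt
    have h1 := hM x y t htV
    rw [max_eq_right (by linarith)] at h1
    have := htmin _ h1 (by linarith)
    linarith
  let δ : M → Lip V M := fun p => ⟨fun x => if x = p then ⟨t, htV⟩ else ⟨0, h0⟩, by
    intro x y
    have hd := dist_nonneg (x := x) (y := y)
    by_cases hx : x = p
    · by_cases hy : y = p
      · simp [hx, hy]
      · have := htd x y (by rw [hx]; exact fun h => hy h.symm)
        simp [hx, hy]
        rw [hx] at this
        exact this
    · by_cases hy : y = p
      · simp [hx, hy]
        rw [hy] at hd
        linarith
      · simp [hx, hy]⟩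
  have hδself : ∀ p, (δ p).1 p = ⟨t, htV⟩ := by intro p; simp [δ]
  have hδne : ∀ p x, x ≠ p → (δ p).1 x = ⟨0, h0⟩ := by intro p x h; simp [δ, h]
  have hδle : ∀ p (φ : Lip V M), 0 < (φ.1 p : ℝ) → δ p ≤ φ := by
    intro p φ hφ
    rw [lip_le_iff]
    intro s x hs1 hs2
    exfalso
    have hs : s ≤ φ.1 x := by
      refine hs1.trans ?_
      by_cases hx : x = p
      · subst hx; rw [hδself]; exact htmin _ (φ.1 x).2 hφ
      · rw [hδne p x hx]; exact hV _ (φ.1 x).2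
    exact absurd hs2 (not_lt.mpr hs)
  have hδlt : δ m < δ m' := by
    refine lt_of_le_of_ne ?_ ?_
    · rw [lip_le_iff]
      intro s x hs1 hs2
      have hs0 : (0 : ℝ) < s := lt_of_le_of_lt (hV _ ((δ m').1 x).2) hs2
      have hx : x = m := by
        by_contra hx
        rw [hδne m x hx] at hs1
        have : (s : ℝ) ≤ 0 := hs1
        linarith
      subst hx
      rw [hδself] at hs1
      refine ⟨⟨t, htV⟩, m', by rw [hδself], ?_, ?_⟩
      · rw [hδne x m' hmm.ne']; exact ht0
      · rw [Prod.Lex.toLex_le_toLex]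
        rcases lt_or_eq_of_le hs1 with h | h
        · exact Or.inl h
        · exact Or.inr ⟨h, hmm.le⟩
    · intro h
      have h1 := hδself m
      rw [h, hδne m' m hmm.ne] at h1
      have : (0 : ℝ) = t := congrArg Subtype.val h1
      linarith
  have hex : ∃ x, 0 < ((w x).1 m : ℝ) := by
    obtain ⟨x, hx⟩ := hw.1 (δ m)
    exact ⟨x, by rw [hx, hδself]; exact ht0⟩
  obtain ⟨x, hx, hxmin⟩ : ∃ x, 0 < ((w x).1 m : ℝ) ∧ ∀ x', x' < x → ((w x').1 m : ℝ) ≤ 0 := by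
    obtain ⟨x, hx, hmin⟩ := WellFounded.has_min (wellFounded_lt (α := Fin n))
      {x | 0 < ((w x).1 m : ℝ)} hex
    exact ⟨x, hx, fun x' hx' => not_lt.mp (fun h => hmin x' h hx')⟩
  have hno : ∀ x', x' < x → w x' ≠ δ m := by
    intro x' hx' h
    have := hxmin x' hx'
    rw [h, hδself] at this
    simp only at this
    linarith
  refine ⟨x, ?_, ?_⟩
  · intro x' hx'
    have h1 : ((w x').1 m : ℝ) = 0 := le_antisymm (hxmin x' hx') (hV _ ((w x').1 m).2)
    have h2 : ((w x').1 m' : ℝ) = 0 := by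
      by_contra hne
      have hp : 0 < ((w x').1 m' : ℝ) :=
        lt_of_le_of_ne (hV _ ((w x').1 m').2) (Ne.symm hne)
      obtain ⟨x'', hx'', e⟩ := hw.2 x' (δ m) (lt_of_lt_of_le hδlt (hδle m' _ hp))
      exact hno x'' (hx''.trans hx') e
    exact Subtype.ext (h1.trans h2.symm)
  · have : w x = δ m := by
      by_contra hne
      obtain ⟨x'', hx'', e⟩ := hw.2 x (δ m) (lt_of_le_of_ne (hδle m _ hx) (Ne.symm hne))
      exact hno x'' hx'' e
    rw [this, hδself, hδne m m' hmm.ne']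
    exact ht0

theorem phi_dist {n : ℕ} (w : Fin n → Lip V M) (hw : Rigid w) (K : ℝ) (hK : K ∈ V)
    (hV : ∀ v ∈ V, 0 ≤ v) (hKd : ∀ x y : M, dist x y ≤ K)
    (hM : ∀ x y : M, ∀ v ∈ V, max 0 (v - dist x y) ∈ V) (m m' : M) :
    dist (fun x => (w x).1 m) (fun x => (w x).1 m') = dist m m' := by
  apply le_antisymm
  · rw [dist_pi_le_iff dist_nonneg]
    intro x
    rw [Subtype.dist_eq, Real.dist_eq, abs_le]
    have h1 := (w x).2 m m'
    have h2 := (w x).2 m' m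
    rw [dist_comm] at h2
    constructor <;> linarith
  · let φ : Lip V M := ⟨fun y => ⟨max 0 (K - dist m y), hM m y K hK⟩, by
      intro x y
      simp only
      have h1 := dist_triangle m x y
      refine max_le ?_ ?_
      · have := le_max_left 0 (K - dist m y)
        have := dist_nonneg (x := x) (y := y)
        linarith
      · have := le_max_right 0 (K - dist m y)
        linarith⟩
    obtain ⟨x, hx⟩ := hw.1 φ
    refine le_trans ?_ (dist_le_pi_dist (fun x => (w x).1 m) (fun x => (w x).1 m') x)
    rw [hx, Subtype.dist_eq, Real.dist_eq]
    simp only [φ, dist_self, sub_zero]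
    have := hKd m m'
    have h2 := hV K hK
    rw [max_eq_right h2, max_eq_right (by linarith)]
    have : K - (K - dist m m') = dist m m' := by ring
    rw [this]
    exact le_abs_self _

end

/-- The space `V ^ n` with the supremum metric and the (reversed) lexicographic order. -/
noncomputable def cube (V : Finset ℝ) (n : ℕ) : FinOrdMetricSpace :=
  { carrier := Fin n → V
    met := inferInstance
    lin := LinearOrder.lift' (fun g : Fin n → V => toLex (fun i => -(g i : ℝ))) (by
      intro g h e
      have e := toLex.injective e
      funext i
      exact Subtype.ext (neg_injective (congrFun e i)))
    fin := inferInstance }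

theorem cube_lt {V : Finset ℝ} {n : ℕ} {g h : cube V n} (x : Fin n)
    (h1 : ∀ x', x' < x → (g : Fin n → V) x' = (h : Fin n → V) x')
    (h2 : ((h : Fin n → V) x : ℝ) < (g : Fin n → V) x) : g < h := by
  change toLex (fun i => -((g : Fin n → V) i : ℝ)) < toLex (fun i => -((h : Fin n → V) i : ℝ))
  refine ⟨x, ?_, ?_⟩
  · intro j hj
    change -((g : Fin n → V) j : ℝ) = -((h : Fin n → V) j : ℝ)
    rw [h1 j hj]
  · change -((g : Fin n → V) x : ℝ) < -((h : Fin n → V) x : ℝ)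
    linarith

end NRam

open NRam in
/-- **Nešetřil's Ramsey theorem for finite linearly ordered metric spaces.** Given `c ≥ 1`
colors and finite linearly ordered metric spaces `A` and `B`, there is a finite linearly
ordered metric space `C` such that for every coloring with `c` colors of the subspaces of `C`
order isometric to `A` there is a subspace `B'` of `C` order isometric to `B` all of whose
subspaces order isometric to `A` get the same color. -/
theorem nesetril_ordered_metric_ramsey (c : ℕ) (hc : 0 < c) (A B : FinOrdMetricSpace) :
    ∃ C : FinOrdMetricSpace,
      ∀ χ : {s : Set C // IsOrderIsometricCopy A C s} → Fin c,
        ∃ B' : Set C, IsOrderIsometricCopy B C B' ∧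
          ∃ color : Fin c,
            ∀ s : {s : Set C // IsOrderIsometricCopy A C s}, (s : Set C) ⊆ B' → χ s = color := by
  classical
  let S : Finset ℝ := (Finset.univ.image (fun p : B × B => dist p.1 p.2)).filter (fun r => 0 < r)
  obtain ⟨K, hK0, hKd⟩ : ∃ K : ℝ, 0 < K ∧ ∀ x y : B, dist x y ≤ K := by
    refine ⟨1 + ∑ p : B × B, dist p.1 p.2, ?_, ?_⟩
    · have : 0 ≤ ∑ p : B × B, dist p.1 p.2 := Finset.sum_nonneg (fun _ _ => dist_nonneg)
      linarith
    · intro x y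
      have := Finset.single_le_sum (f := fun p : B × B => dist p.1 p.2)
        (fun _ _ => dist_nonneg) (Finset.mem_univ (x, y))
      simp only at this
      linarith
  obtain ⟨V, h0, hKV, hV, hcl⟩ := exists_values S (by
    intro s hs; exact (Finset.mem_filter.mp hs).2) K hK0.le
  have hB : ∀ x y : B, ∀ v ∈ V, max 0 (v - dist x y) ∈ V := by
    intro x y v hv
    rcases eq_or_lt_of_le (dist_nonneg (x := x) (y := y)) with h | h
    · rw [← h, sub_zero, max_eq_right (hV v hv)]; exact hv
    · refine hcl v hv _ (Finset.mem_filter.mpr ⟨?_, h⟩)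
      exact Finset.mem_image.mpr ⟨(x, y), Finset.mem_univ _, rfl⟩
  have hne : ∀ M : FinOrdMetricSpace, Nonempty (Lip V M) := fun M =>
    ⟨⟨fun _ => ⟨0, h0⟩, fun x y => by simp⟩⟩
  have := hne A
  have := hne B
  obtain ⟨n, hn⟩ := dualRamsey (Lip V A) (Lip V B) (Fin c)
  refine ⟨cube V n, fun χ => ?_⟩
  let Φ : (Fin n → Lip V A) → Set (cube V n) := fun u =>
    Set.range (fun a : A => ((fun x => (u x).1 a : Fin n → V) : cube V n))
  obtain ⟨w, hw, col, hcol⟩ := hn (fun u =>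
    if h : IsOrderIsometricCopy A (cube V n) (Φ u) then χ ⟨Φ u, h⟩ else ⟨0, hc⟩)
  let Ψ : B → cube V n := fun b => (fun x => (w x).1 b : Fin n → V)
  have hΨd : ∀ x y, dist (Ψ x) (Ψ y) = dist x y := fun x y =>
    phi_dist w hw K hKV hV hKd hB x y
  have hΨm : StrictMono Ψ := by
    intro x y hxy
    obtain ⟨i, h1, h2⟩ := phi_lt w hw h0 hV ⟨K, hKV, hK0⟩ hB hxy
    exact cube_lt i h1 h2
  refine ⟨Set.range Ψ, ⟨Equiv.ofInjective Ψ hΨm.injective, ?_, ?_⟩, col, ?_⟩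
  · intro x y; exact hΨd x y
  · intro x y; exact hΨm.le_iff_le.symm
  · rintro ⟨s, hs⟩ hsB
    simp only at hsB
    have hs' := hs
    obtain ⟨e, he1, he2⟩ := hs'
    have hf : ∀ a : A, ∃ b : B, Ψ b = (e a : cube V n) := fun a => hsB (e a).2
    choose f hf using hf
    have hfd : ∀ x y, dist (f x) (f y) = dist x y := by
      intro x y; rw [← hΨd, hf, hf, he1]
    have hfm : Monotone f := by
      intro x y hxy
      rw [← hΨm.le_iff_le, hf, hf]
      exact (he2 x y).mp hxy
    have hr := restrict_rigid (V := V) f hfd hfm h0 hV hB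
    have hfin := hcol _ hr
    have hΦ : Φ (fun i => restr f hfd (w i)) = s := by
      ext z
      constructor
      · rintro ⟨a, rfl⟩
        have : ((fun x => (w x).1 (f a) : Fin n → V) : cube V n) = (e a : cube V n) := hf a
        change ((fun x => (w x).1 (f a) : Fin n → V) : cube V n) ∈ s
        rw [this]
        exact (e a).2
      · intro hz
        refine ⟨e.symm ⟨z, hz⟩, ?_⟩
        have := hf (e.symm ⟨z, hz⟩)
        rw [Equiv.apply_symm_apply] at this
        exact this
    rw [dif_pos (by rw [hΦ]; exact hs)] at hfin
    rw [← hfin]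
    congr 1
    exact Subtype.ext hΦ.symm
end

section
/- Let p₁, …, p_k be prime numbers and let c be a positive integer. Then: there exists l₁ such that for all n₁ ≥ l₁, there exists l₂ such that for all n₂ ≥ l₂, …, there exists l_k such that for all n_k ≥ l_k, for every coloring with c colors of the product ∏_{i=1}^{k} (ℤ/p_i)^{n_i : l_i} there exist full sets L₁ ⊆ (ℤ/p₁)^{n₁ : l₁}, …, L_k ⊆ (ℤ/p_k)^{n_k : l_k} such that L₁ × ⋯ × L_k is monochromatic. -/
/-- The domain of a partial function from `[n]` to `ℤ/p`, represented as a function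
`Fin n → Option (ZMod p)`. -/
def pdom {p n : ℕ} (f : Fin n → Option (ZMod p)) : Finset (Fin n) :=
  Finset.univ.filter fun i => (f i).isSome

/-- `(ℤ/p)^{n:l}`: the partial functions from `[n]` to `ℤ/p` whose domain has at least
`n - l` elements. -/
def PartBox (p n l : ℕ) : Type := {f : Fin n → Option (ZMod p) // n - l ≤ (pdom f).card}

/-- The restriction of a total function `h : [n] → ℤ/p` to a set `a ⊆ [n]`, as a partial
function. -/
def restr {p n : ℕ} (h : Fin n → ZMod p) (a : Finset (Fin n)) : Fin n → Option (ZMod p) :=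
  fun i => if i ∈ a then some (h i) else none

/-- A set `L ⊆ (ℤ/p)^{n:l}` is *full* if there are `h ∈ (ℤ/p)^n` and `a ⊆ [n]` with exactly
`n - l` elements such that for every `r ∈ ℤ/p` there is `a ⊆ a_r ⊆ [n]` with
`(r + h) ↾ a_r ∈ L`. -/
def IsFull (p n l : ℕ) (L : Set (PartBox p n l)) : Prop :=
  ∃ (h : Fin n → ZMod p) (a : Finset (Fin n)), a.card = n - l ∧
    ∀ r : ZMod p, ∃ ar : Finset (Fin n), a ⊆ ar ∧
      ∃ hmem : n - l ≤ (pdom (restr (fun i => r + h i) ar)).card,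
        (⟨restr (fun i => r + h i) ar, hmem⟩ : PartBox p n l) ∈ L

/-- The core Ramsey conclusion of the Farah–Solecki theorem, for a list `ts` of triples
`(pᵢ, nᵢ, lᵢ)`: every coloring with `c` colors of `∏ᵢ (ℤ/pᵢ)^{nᵢ:lᵢ}` admits full sets
`Lᵢ ⊆ (ℤ/pᵢ)^{nᵢ:lᵢ}` with `L₁ × ⋯ × L_k` monochromatic. -/
def FSCore (c : ℕ) (ts : List (ℕ × ℕ × ℕ)) : Prop :=
  ∀ χ : (∀ i : Fin ts.length, PartBox (ts.get i).1 (ts.get i).2.1 (ts.get i).2.2) → Fin c,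
    ∃ L : ∀ i : Fin ts.length, Set (PartBox (ts.get i).1 (ts.get i).2.1 (ts.get i).2.2),
      (∀ i, IsFull (ts.get i).1 (ts.get i).2.1 (ts.get i).2.2 (L i)) ∧
      ∃ color : Fin c,
        ∀ g : ∀ i : Fin ts.length, PartBox (ts.get i).1 (ts.get i).2.1 (ts.get i).2.2,
          (∀ i, g i ∈ L i) → χ g = color

/-- The alternating quantifier prefix `∃ l₁ ∀ n₁ ≥ l₁ ⋯ ∃ l_k ∀ n_k ≥ l_k` of the
Farah–Solecki theorem, by recursion on the list of remaining primes; `ts` accumulates the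
triples `(pᵢ, nᵢ, lᵢ)` already chosen. -/
def FSAux (c : ℕ) : List ℕ → List (ℕ × ℕ × ℕ) → Prop
  | [], ts => FSCore c ts
  | p :: ps, ts => ∃ l : ℕ, ∀ n : ℕ, l ≤ n → FSAux c ps (ts ++ [(p, n, l)])

namespace FS

section Alg

variable {p : ℕ} [Fact p.Prime]

/-- shift -/
def rho (r : ZMod p) : (ZMod p → ZMod p) →ₗ[ZMod p] (ZMod p → ZMod p) :=
  LinearMap.funLeft _ _ (fun x => x - r)

/-- norm -/
def nrm : (ZMod p → ZMod p) →ₗ[ZMod p] (ZMod p → ZMod p) where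
  toFun f := fun _ => ∑ j, f j
  map_add' f g := by ext; simp [Finset.sum_add_distrib]
  map_smul' c f := by ext; simp [Finset.mul_sum]

def h1 : (ZMod p → ZMod p) →ₗ[ZMod p] (ZMod p → ZMod p) where
  toFun f := fun x => ∑ j : ZMod p, if 0 < j.val ∧ j.val ≤ x.val then f j else 0
  map_add' f g := by
    ext x; simp only [Pi.add_apply, ← Finset.sum_add_distrib]
    refine Finset.sum_congr rfl fun j _ => ?_
    split_ifs <;> simp
  map_smul' c f := by ext; simp [Finset.mul_sum]

def h2 : (ZMod p → ZMod p) →ₗ[ZMod p] (ZMod p → ZMod p) where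
  toFun f := Pi.single 0 (f 0)
  map_add' f g := by simp [Pi.single_add]
  map_smul' c f := by simp [← Pi.single_smul]

def dd (k : ℕ) : (ZMod p → ZMod p) →ₗ[ZMod p] (ZMod p → ZMod p) :=
  if Even k then nrm else LinearMap.id - rho 1

def hh (k : ℕ) : (ZMod p → ZMod p) →ₗ[ZMod p] (ZMod p → ZMod p) :=
  if Even k then h2 else h1

def hs (k : ℕ) (t : ZMod p) : (ZMod p → ZMod p) →ₗ[ZMod p] (ZMod p → ZMod p) :=
  rho t ∘ₗ hh k ∘ₗ rho (-t)

lemma rho_apply (r : ZMod p) (f : ZMod p → ZMod p) (x : ZMod p) : rho r f x = f (x - r) := rfl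
lemma nrm_apply (f : ZMod p → ZMod p) (x : ZMod p) : nrm f x = ∑ j, f j := rfl
lemma h1_apply (f : ZMod p → ZMod p) (x : ZMod p) :
    h1 f x = ∑ j : ZMod p, if 0 < j.val ∧ j.val ≤ x.val then f j else 0 := rfl
lemma h2_apply (f : ZMod p → ZMod p) : h2 f = Pi.single 0 (f 0) := rfl

lemma rho_rho (a b : ZMod p) (f : ZMod p → ZMod p) : rho a (rho b f) = rho (a + b) f := by
  ext x; simp only [rho_apply]; congr 1; ring

lemma rho_zero (f : ZMod p → ZMod p) : rho 0 f = f := by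
  ext x; simp [rho_apply]

lemma nrm_rho (a : ZMod p) (f : ZMod p → ZMod p) : nrm (rho a f) = nrm f := by
  ext x; simp only [nrm_apply, rho_apply]
  exact Fintype.sum_equiv (Equiv.subRight a) _ _ (fun _ => rfl)

lemma rho_nrm (a : ZMod p) (f : ZMod p → ZMod p) : rho a (nrm f) = nrm f := by
  ext x; simp only [nrm_apply, rho_apply]

/-- key partial-sum identity -/
lemma h1_diff (f : ZMod p → ZMod p) (x : ZMod p) :
    h1 f x - h1 f (x - 1) = f x - if x = 0 then ∑ j, f j else 0 := by
  have hp : 1 < p := (Fact.out : p.Prime).one_lt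
  simp only [h1_apply]
  by_cases hx : x = 0
  · subst hx
    have hv : ((0 : ZMod p) - 1).val = p - 1 := by
      obtain ⟨q, rfl⟩ : ∃ q, p = q + 1 := ⟨p - 1, by omega⟩
      rw [zero_sub, ZMod.val_neg_one]; simp
    rw [hv, ← Finset.sum_sub_distrib, if_pos rfl,
      ← Finset.add_sum_erase _ _ (Finset.mem_univ (0 : ZMod p)),
      ← Finset.add_sum_erase _ f (Finset.mem_univ (0 : ZMod p))]
    have : ∑ j ∈ Finset.univ.erase (0 : ZMod p),
        ((if 0 < j.val ∧ j.val ≤ (0 : ZMod p).val then f j else 0) -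
          if 0 < j.val ∧ j.val ≤ p - 1 then f j else 0) =
        ∑ j ∈ Finset.univ.erase (0 : ZMod p), - f j := by
      refine Finset.sum_congr rfl fun j hj => ?_
      have h0 : j.val ≠ 0 := by
        rw [Ne, ZMod.val_eq_zero]; exact (Finset.mem_erase.1 hj).1
      have h3 := ZMod.val_lt j
      rw [if_neg (by rw [ZMod.val_zero]; omega), if_pos (by omega)]; simp
    rw [this]; simp
  · have h0 : x.val ≠ 0 := by rwa [Ne, ZMod.val_eq_zero]
    have hv : (x - 1).val = x.val - 1 := by
      rw [ZMod.val_sub]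
      · rw [ZMod.val_one]
      · rw [ZMod.val_one]; omega
    rw [hv, ← Finset.sum_sub_distrib, if_neg hx, Finset.sum_eq_single x]
    · rw [if_pos (by omega), if_neg (by omega)]
    · intro j _ hj
      have : j.val ≠ x.val := fun h => hj (ZMod.val_injective p h)
      by_cases h : 0 < j.val ∧ j.val ≤ x.val
      · rw [if_pos h, if_pos (by omega)]; simp
      · rw [if_neg h, if_neg (by omega)]; simp
    · simp

lemma h1_zero (f : ZMod p → ZMod p) : h1 f 0 = 0 := by
  rw [h1_apply]
  refine Finset.sum_eq_zero fun j _ => ?_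
  rw [if_neg (by rw [ZMod.val_zero]; omega)]

/-- functions fixed by the shift are constant -/
lemma const_of_shift (f : ZMod p → ZMod p) (h : ∀ x, f x = f (x - 1)) (x : ZMod p) : f x = f 0 := by
  have key : ∀ m : ℕ, f (m : ZMod p) = f 0 := by
    intro m
    induction m with
    | zero => simp
    | succ m ih => rw [h]; simpa using ih
  have := key x.val
  rwa [ZMod.natCast_zmod_val] at this

lemma rel_odd (f : ZMod p → ZMod p) :
    (h1 f - rho 1 (h1 f)) + h2 (nrm f) = f := by
  ext x
  simp only [Pi.add_apply, Pi.sub_apply, rho_apply, h1_diff, h2_apply, nrm_apply, Pi.single_apply]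
  ring

lemma rel_even (f : ZMod p → ZMod p) :
    nrm (h2 f) + h1 (f - rho 1 f) = f := by
  have hn : ∀ x, nrm (h2 f) x = f 0 := by
    intro x; simp [nrm_apply, h2_apply, Pi.single_apply]
  have hs0 : ∑ j, (f - rho 1 f) j = 0 := by
    have := congrFun (nrm_rho 1 f) 0
    simp only [nrm_apply] at this
    simp [Finset.sum_sub_distrib, this]
  ext x
  have key := const_of_shift (fun x => h1 (f - rho 1 f) x - f x) (by
    intro x
    have := h1_diff (f - rho 1 f) x
    rw [hs0] at this
    simp only [Pi.sub_apply, rho_apply, ite_self, sub_zero] at this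
    linear_combination this) x
  simp only [h1_zero] at key
  rw [Pi.add_apply, hn]
  linear_combination key

lemma rel (k : ℕ) (f : ZMod p → ZMod p) : dd (k+1) (hh (k+1) f) + hh k (dd k f) = f := by
  by_cases h : Even k
  · have h' : ¬ Even (k+1) := by rw [Nat.even_add_one]; simpa using h
    simp only [dd, hh, if_pos h, if_neg h']
    exact rel_odd f
  · have h' : Even (k+1) := by rw [Nat.even_add_one]; simpa using h
    simp only [dd, hh, if_neg h, if_pos h']
    exact rel_even f

lemma hh_hh (k : ℕ) (f : ZMod p → ZMod p) : hh (k+1) (hh k f) = 0 := by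
  by_cases h : Even k
  · have h' : ¬ Even (k+1) := by rw [Nat.even_add_one]; simpa using h
    simp only [hh, if_pos h, if_neg h']
    ext x
    rw [h1_apply]
    refine Finset.sum_eq_zero fun j _ => ?_
    split_ifs with hj
    · rw [h2_apply, Pi.single_apply, if_neg]
      rintro rfl
      simp at hj
    · rfl
  · have h' : Even (k+1) := by rw [Nat.even_add_one]; simpa using h
    simp only [hh, if_neg h, if_pos h', h2_apply, h1_zero]
    simp

lemma dd_rho (k : ℕ) (t : ZMod p) (f : ZMod p → ZMod p) : dd k (rho t f) = rho t (dd k f) := by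
  by_cases h : Even k
  · simp only [dd, if_pos h, nrm_rho, rho_nrm]
  · simp only [dd, if_neg h, LinearMap.sub_apply, LinearMap.id_apply, map_sub, rho_rho, add_comm]

lemma rel_s (k : ℕ) (t : ZMod p) (f : ZMod p → ZMod p) :
    dd (k+1) (hs (k+1) t f) + hs k t (dd k f) = f := by
  simp only [hs, LinearMap.comp_apply, dd_rho]
  rw [← dd_rho k, ← map_add, rel, rho_rho]; simp [rho_zero]

lemma hs_hs (k : ℕ) (t : ZMod p) (f : ZMod p → ZMod p) : hs (k+1) t (hs k t f) = 0 := by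
  simp only [hs, LinearMap.comp_apply, rho_rho, neg_add_cancel, rho_zero, hh_hh, map_zero]

lemma hs_rho (k : ℕ) (s t : ZMod p) (f : ZMod p → ZMod p) :
    hs k (s + t) (rho t f) = rho t (hs k s f) := by
  simp only [hs, LinearMap.comp_apply, rho_rho]
  rw [show -(s+t) + t = -s by ring, add_comm s t]

lemma hs_const (t c : ZMod p) : hs 0 t (fun _ => c) = Pi.single t c := by
  ext x
  simp only [hs, hh, LinearMap.comp_apply, rho_apply, Even.zero, if_true, h2_apply,
    Pi.single_apply, sub_eq_zero]

end Alg

section Chains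

open Finsupp

variable {p : ℕ} [Fact p.Prime] {V : Type*}

abbrev SS (p : ℕ) (V : Type*) := List V →₀ ZMod p

noncomputable def del : SS p V →ₗ[ZMod p] SS p V :=
  Finsupp.linearCombination (ZMod p)
    (fun F => ∑ j ∈ Finset.range F.length, (-1 : ZMod p)^j • single (F.eraseIdx j) 1)

noncomputable def cns (v : V) : SS p V →ₗ[ZMod p] SS p V :=
  Finsupp.lmapDomain _ _ (List.cons v)

noncomputable def mp (u : V → V) : SS p V →ₗ[ZMod p] SS p V :=
  Finsupp.lmapDomain _ _ (List.map u)

lemma del_single (F : List V) : del (single F (1 : ZMod p)) =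
    ∑ j ∈ Finset.range F.length, (-1 : ZMod p)^j • single (F.eraseIdx j) 1 := by
  simp [del]

lemma cns_single (v : V) (F : List V) :
    cns v (single F (1 : ZMod p)) = single (v :: F) 1 := by simp [cns]

lemma mp_single (u : V → V) (F : List V) :
    mp u (single F (1 : ZMod p)) = single (F.map u) 1 := by simp [mp]

lemma lext {M : Type*} [AddCommGroup M] [Module (ZMod p) M] {f g : SS p V →ₗ[ZMod p] M}
    (h : ∀ F, f (single F 1) = g (single F 1)) (z : SS p V) : f z = g z := by
  have : f = g := by
    refine Finsupp.lhom_ext' fun F => ?_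
    ext
    simpa using h F
  rw [this]

lemma del_cns (v : V) (z : SS p V) : del (cns v z) = z - cns v (del z) := by
  refine lext (f := del ∘ₗ cns v) (g := LinearMap.id - cns v ∘ₗ del) (fun F => ?_) z
  simp only [LinearMap.comp_apply, LinearMap.sub_apply, LinearMap.id_apply, cns_single, del_single,
    List.length_cons, Finset.sum_range_succ', map_sum, map_smul]
  simp [pow_succ, add_comm, sub_eq_add_neg]

lemma mp_cns (u : V → V) (v : V) (z : SS p V) : mp u (cns v z) = cns (u v) (mp u z) := by
  refine lext (f := mp u ∘ₗ cns v) (g := cns (u v) ∘ₗ mp u) (fun F => ?_) z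
  simp [cns_single, mp_single]

lemma mp_mp (u w : V → V) (z : SS p V) : mp u (mp w z) = mp (u ∘ w) z := by
  refine lext (f := mp u ∘ₗ mp w) (g := mp (u ∘ w)) (fun F => ?_) z
  simp [mp_single]

lemma mp_id (z : SS p V) : mp id z = z := by
  refine lext (f := mp id) (g := LinearMap.id) (fun F => ?_) z
  simp [mp_single]

lemma del_nil : del (single ([] : List V) (1 : ZMod p)) = 0 := by simp [del_single]

lemma del_cons (v : V) (L : List V) : del (single (v :: L) (1 : ZMod p)) =
    single L 1 - cns v (del (single L 1)) := by
  rw [← cns_single, del_cns]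

lemma del_del (z : SS p V) : del (del z) = 0 := by
  refine lext (f := del ∘ₗ del) (g := 0) (fun F => ?_) z
  simp only [LinearMap.comp_apply, LinearMap.zero_apply]
  induction F with
  | nil => simp [del_nil]
  | cons v L ih => rw [del_cons, map_sub, del_cns, ih]; simp

lemma del_mp (u : V → V) (z : SS p V) : del (mp u z) = mp u (del z) := by
  refine lext (f := del ∘ₗ mp u) (g := mp u ∘ₗ del) (fun F => ?_) z
  simp only [LinearMap.comp_apply, mp_single]
  induction F with
  | nil => simp [del_nil]
  | cons v L ih => rw [List.map_cons, del_cons, ih, del_cons, map_sub, mp_cns, mp_single]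

/-- prism on lists -/
noncomputable def prismL (u w : V → V) : List V → SS p V
  | [] => 0
  | v :: L => single (u v :: w v :: L.map w) 1 - cns (u v) (prismL u w L)

noncomputable def prism (u w : V → V) : SS p V →ₗ[ZMod p] SS p V :=
  Finsupp.linearCombination (ZMod p) (prismL u w)

lemma prism_single (u w : V → V) (F : List V) :
    prism u w (single F (1 : ZMod p)) = prismL u w F := by simp [prism]

lemma prism_cns (u w : V → V) (v : V) (z : SS p V) :
    prism u w (cns v z) = cns (u v) (cns (w v) (mp w z)) - cns (u v) (prism u w z) := by
  refine lext (f := prism u w ∘ₗ cns v)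
    (g := cns (u v) ∘ₗ cns (w v) ∘ₗ mp w - cns (u v) ∘ₗ prism u w) (fun F => ?_) z
  simp [cns_single, prism_single, mp_single, prismL]

lemma prism_rel (u w : V → V) (z : SS p V) :
    del (prism u w z) + prism u w (del z) = mp w z - mp u z := by
  refine lext (f := del ∘ₗ prism u w + prism u w ∘ₗ del) (g := mp w - mp u) (fun F => ?_) z
  simp only [LinearMap.comp_apply, LinearMap.add_apply, LinearMap.sub_apply]
  induction F with
  | nil => simp [del_nil, prism_single, prismL, mp_single]
  | cons v L ih =>
    rw [← cns_single, prism_cns, del_cns, mp_cns, mp_cns, map_sub, map_sub, prism_cns, del_cns,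
      del_cns, del_cns, del_mp, ← sub_eq_zero]
    have ih' := congrArg (cns (u v)) ih
    simp only [map_sub, map_add] at ih' ⊢
    rw [← sub_eq_zero] at ih'
    rw [← ih']
    abel

lemma supp_ind {M : Type*} [AddCommGroup M] [Module (ZMod p) M] {s : Set (List V)}
    {f : SS p V →ₗ[ZMod p] M} {N : Submodule (ZMod p) M}
    (h : ∀ F ∈ s, f (single F 1) ∈ N) {z : SS p V}
    (hz : z ∈ Finsupp.supported (ZMod p) (ZMod p) s) : f z ∈ N := by
  rw [Finsupp.supported_eq_span_single] at hz
  have : Submodule.span (ZMod p) ((fun i => single i (1 : ZMod p)) '' s) ≤ N.comap f := by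
    rw [Submodule.span_le]
    rintro _ ⟨F, hF, rfl⟩
    exact h F hF
  exact this hz

lemma supp_eq {M : Type*} [AddCommGroup M] [Module (ZMod p) M] {s : Set (List V)}
    {f g : SS p V →ₗ[ZMod p] M}
    (h : ∀ F ∈ s, f (single F 1) = g (single F 1)) {z : SS p V}
    (hz : z ∈ Finsupp.supported (ZMod p) (ZMod p) s) : f z = g z := by
  have := supp_ind (f := f - g) (N := ⊥) (s := s) (fun F hF => by simp [h F hF]) hz
  simpa [sub_eq_zero] using this

lemma prismL_mem (u w : V → V) (F : List V) : prismL u w F ∈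
    Finsupp.supported (ZMod p) (ZMod p)
      {G : List V | G.length = F.length + 1 ∧ ∀ f ∈ G, ∃ f' ∈ F, f = u f' ∨ f = w f'} := by
  induction F with
  | nil => simp [prismL]
  | cons v L ih =>
    rw [prismL]
    refine Submodule.sub_mem _ (Finsupp.single_mem_supported _ _ ?_) ?_
    · refine ⟨by simp, ?_⟩
      intro f hf
      simp only [List.mem_cons, List.mem_map] at hf
      rcases hf with rfl | rfl | ⟨a, ha, rfl⟩
      · exact ⟨v, by simp, Or.inl rfl⟩
      · exact ⟨v, by simp, Or.inr rfl⟩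
      · exact ⟨a, by simp [ha], Or.inr rfl⟩
    · refine supp_ind (fun G hG => ?_) ih
      rw [cns_single]
      refine Finsupp.single_mem_supported _ _ ⟨by simp [hG.1], ?_⟩
      intro f hf
      rcases List.mem_cons.1 hf with rfl | hf
      · exact ⟨v, by simp, Or.inl rfl⟩
      · obtain ⟨f', h1, h2⟩ := hG.2 f hf
        exact ⟨f', by simp [h1], h2⟩

/-- the map to the minimal resolution -/
noncomputable def Psi (s : List V → ZMod p) : ℕ → SS p V →ₗ[ZMod p] (ZMod p → ZMod p)
  | 0 => Finsupp.linearCombination (ZMod p) (fun _ => fun _ => 1)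
  | k+1 => Finsupp.linearCombination (ZMod p) (fun F => hs k (s F) (Psi s k (del (single F 1))))

lemma Psi_zero_single (s : List V → ZMod p) (F : List V) :
    Psi s 0 (single F 1) = fun _ => 1 := by simp [Psi]

lemma Psi_succ_single (s : List V → ZMod p) (k : ℕ) (F : List V) :
    Psi s (k+1) (single F 1) = hs k (s F) (Psi s k (del (single F 1))) := by simp [Psi]

lemma Psi_zero_const (s : List V → ZMod p) (z : SS p V) : ∃ c, Psi s 0 z = fun _ => c := by
  refine ⟨Psi s 0 z 0, ?_⟩
  ext x
  refine lext (f := LinearMap.proj x ∘ₗ Psi s 0) (g := LinearMap.proj 0 ∘ₗ Psi s 0) (fun F => ?_) z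
  simp [Psi]

lemma Psi_del (s : List V → ZMod p) (k : ℕ) (z : SS p V) :
    dd k (Psi s (k+1) z) = Psi s k (del z) := by
  induction k generalizing z with
  | zero =>
    refine lext (f := dd 0 ∘ₗ Psi s 1) (g := Psi s 0 ∘ₗ del) (fun F => ?_) z
    simp only [LinearMap.comp_apply, Psi_succ_single]
    obtain ⟨c, hc⟩ := Psi_zero_const s (del (single F 1))
    rw [hc, hs_const]
    ext x
    simp [dd, nrm_apply]
  | succ k ih =>
    refine lext (f := dd (k+1) ∘ₗ Psi s (k+2)) (g := Psi s (k+1) ∘ₗ del) (fun F => ?_) z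
    simp only [LinearMap.comp_apply]
    rw [Psi_succ_single]
    have := rel_s k (s F) (Psi s (k+1) (del (single F 1)))
    rw [ih, del_del] at this
    simpa using this

lemma mem_eraseIdx_length {F : List V} {k j : ℕ} (hF : F.length = k + 1) (hj : j < F.length) :
    (F.eraseIdx j).length = k := by
  rw [List.length_eraseIdx_of_lt hj]; omega

/-- equivariance -/
lemma Psi_equiv (s : List V → ZMod p) (act : V → V) (t : ZMod p) (Good : List V → Prop)
    (hG : ∀ F j, Good F → Good (F.eraseIdx j))
    (hs' : ∀ F, F ≠ [] → Good F → s (F.map act) = s F + t) (k : ℕ) (F : List V)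
    (hF : F.length = k) (hF' : Good F) :
    Psi s k (mp act (single F 1)) = rho t (Psi s k (single F 1)) := by
  induction k generalizing F with
  | zero => rw [mp_single, Psi_zero_single, Psi_zero_single]; rfl
  | succ k ih =>
    rw [mp_single, Psi_succ_single, Psi_succ_single, hs' F (by rintro rfl; simp at hF) hF',
      ← hs_rho, ← mp_single, del_mp]
    congr 1
    rw [del_single]
    simp only [map_sum, map_smul]
    refine Finset.sum_congr rfl fun j hj => ?_
    rw [ih _ (mem_eraseIdx_length hF (Finset.mem_range.1 hj)) (hG _ _ hF')]

/-- vanishing -/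
lemma Psi_vanish (s : List V → ZMod p) (rk : List V → ℕ) (Good : List V → Prop)
    (hG : ∀ F j, Good F → Good (F.eraseIdx j))
    (h1 : ∀ F, F ≠ [] → 1 ≤ rk F)
    (hle : ∀ F j, rk (F.eraseIdx j) ≤ rk F)
    (heq : ∀ F j, rk (F.eraseIdx j) = rk F → s (F.eraseIdx j) = s F) (k : ℕ) (F : List V)
    (hF : F.length = k) (hF' : Good F) (hr : rk F < k) :
    Psi s k (single F 1) = 0 := by
  induction k generalizing F with
  | zero => omega
  | succ k ih =>
    rw [Psi_succ_single, del_single]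
    simp only [map_sum, map_smul]
    refine Finset.sum_eq_zero fun j hj => ?_
    have hl := mem_eraseIdx_length hF (Finset.mem_range.1 hj)
    have := h1 F (by rintro rfl; simp at hF)
    rcases (hle F j).lt_or_eq with h | h
    · rw [ih _ hl (hG _ _ hF') (by omega)]; simp
    · obtain ⟨k', rfl⟩ : ∃ k', k = k' + 1 := ⟨k - 1, by omega⟩
      rw [Psi_succ_single, heq F j h, hs_hs]; simp

end Chains

section Partial

open Finsupp

variable {p : ℕ} [Fact p.Prime] {n : ℕ}

abbrev PF (p n : ℕ) := Fin n → Option (ZMod p)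

def act (r : ZMod p) (f : PF p n) : PF p n := fun i => (f i).map (fun y => r + y)

def GoodB (m : ℕ) (F : List (PF p n)) : Prop :=
  ∃ (x : Fin n → ZMod p) (a : Finset (Fin n)), n ≤ a.card + m ∧
    ∀ f ∈ F, (∀ i, f i = none ∨ f i = some (x i)) ∧ ∀ i ∈ a, f i ≠ none

def Sub (p n m k : ℕ) : Submodule (ZMod p) (SS p (PF p n)) :=
  Finsupp.supported (ZMod p) (ZMod p) {F | F.length = k ∧ GoodB m F}

lemma GoodB.mono {m m' : ℕ} (h : m ≤ m') {F : List (PF p n)} (hF : GoodB m F) : GoodB m' F := by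
  obtain ⟨x, a, h1, h2⟩ := hF
  exact ⟨x, a, by omega, h2⟩

lemma GoodB.erase {m : ℕ} {F : List (PF p n)} (j : ℕ) (hF : GoodB m F) :
    GoodB m (F.eraseIdx j) := by
  obtain ⟨x, a, h1, h2⟩ := hF
  exact ⟨x, a, h1, fun f hf => h2 f (List.mem_of_mem_eraseIdx hf)⟩

lemma GoodB.act {m : ℕ} {F : List (PF p n)} (r : ZMod p) (hF : GoodB m F) :
    GoodB m (F.map (act r)) := by
  obtain ⟨x, a, h1, h2⟩ := hF
  refine ⟨fun i => r + x i, a, h1, fun f hf0 => ?_⟩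
  obtain ⟨f, hf, rfl⟩ := List.mem_map.1 hf0
  refine ⟨fun i => ?_, fun i hi => ?_⟩
  · rcases (h2 f hf).1 i with h | h <;> simp [FS.act, h]
  · simpa [FS.act] using (h2 f hf).2 i hi

lemma Sub_mono {m m' k : ℕ} (h : m ≤ m') : Sub p n m k ≤ Sub p n m' k :=
  Finsupp.supported_mono fun _ hF => ⟨hF.1, hF.2.mono h⟩

lemma Sub_act {m k : ℕ} (r : ZMod p) {z : SS p (PF p n)} (hz : z ∈ Sub p n m k) :
    mp (act r) z ∈ Sub p n m k := by
  refine supp_ind (fun F hF => ?_) hz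
  rw [mp_single]
  exact Finsupp.single_mem_supported _ _ ⟨by simp [hF.1], hF.2.act r⟩

def rem (i : Fin n) (f : PF p n) : PF p n := Function.update f i none
def setz (i : Fin n) (f : PF p n) : PF p n := Function.update f i (some 0)

lemma prism_rem_id (i : Fin n) {m k : ℕ} {z : SS p (PF p n)} (hz : z ∈ Sub p n m k) :
    prism (rem i) id z ∈ Sub p n (m+1) (k+1) := by
  refine supp_ind (fun F hF => ?_) hz
  rw [prism_single]
  refine Finsupp.supported_mono ?_ (prismL_mem _ _ F)
  rintro G ⟨hl, hG⟩
  obtain ⟨x, a, h1, h2⟩ := hF.2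
  refine ⟨by rw [hl, hF.1], x, a.erase i, ?_, fun f hf => ?_⟩
  · have := Finset.pred_card_le_card_erase (s := a) (a := i)
    omega
  · obtain ⟨f', hf', rfl | rfl⟩ := hG f hf
    · refine ⟨fun j => ?_, fun j hj => ?_⟩
      · by_cases hj : j = i
        · subst hj; simp [rem]
        · simpa [rem, hj] using (h2 f' hf').1 j
      · have hj' := Finset.mem_erase.1 hj
        simpa [rem, hj'.1] using (h2 f' hf').2 j hj'.2
    · exact ⟨(h2 _ hf').1, fun j hj => (h2 _ hf').2 j (Finset.mem_of_mem_erase hj)⟩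

lemma prism_rem_setz (i : Fin n) {m k : ℕ} {z : SS p (PF p n)} (hz : z ∈ Sub p n m k) :
    prism (rem i) (setz i) z ∈ Sub p n (m+1) (k+1) := by
  refine supp_ind (fun F hF => ?_) hz
  rw [prism_single]
  refine Finsupp.supported_mono ?_ (prismL_mem _ _ F)
  rintro G ⟨hl, hG⟩
  obtain ⟨x, a, h1, h2⟩ := hF.2
  refine ⟨by rw [hl, hF.1], Function.update x i 0, a.erase i, ?_, fun f hf => ?_⟩
  · have := Finset.pred_card_le_card_erase (s := a) (a := i)
    omega
  · obtain ⟨f', hf', rfl | rfl⟩ := hG f hf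
    · refine ⟨fun j => ?_, fun j hj => ?_⟩
      · by_cases hj : j = i
        · subst hj; simp [rem]
        · simpa [rem, hj] using (h2 f' hf').1 j
      · have hj' := Finset.mem_erase.1 hj
        simpa [rem, hj'.1] using (h2 f' hf').2 j hj'.2
    · refine ⟨fun j => ?_, fun j hj => ?_⟩
      · by_cases hj : j = i
        · subst hj; simp [setz]
        · simpa [setz, hj] using (h2 f' hf').1 j
      · have hj' := Finset.mem_erase.1 hj
        simpa [setz, hj'.1] using (h2 f' hf').2 j hj'.2

def SubI (p n : ℕ) (I : Finset (Fin n)) (m k : ℕ) : Submodule (ZMod p) (SS p (PF p n)) :=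
  Finsupp.supported (ZMod p) (ZMod p)
    {F | (F.length = k ∧ GoodB m F) ∧ ∀ f ∈ F, ∀ i ∈ I, f i = some 0}

lemma SubI_le (I : Finset (Fin n)) (m k : ℕ) : SubI p n I m k ≤ Sub p n m k :=
  Finsupp.supported_mono fun _ hF => hF.1

lemma SubI_setz (I : Finset (Fin n)) (i : Fin n) {m k : ℕ} {z : SS p (PF p n)}
    (hz : z ∈ SubI p n I m k) : mp (setz i) z ∈ SubI p n (insert i I) m k := by
  refine supp_ind (fun F hF => ?_) hz
  rw [mp_single]
  refine Finsupp.single_mem_supported _ _ ?_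
  obtain ⟨⟨hl, x, a, h1, h2⟩, h3⟩ := hF
  refine ⟨⟨by simpa using hl, Function.update x i 0, a, h1, ?_⟩, ?_⟩
  · intro f hf0
    obtain ⟨f, hf, rfl⟩ := List.mem_map.1 hf0
    refine ⟨fun j => ?_, fun j hj => ?_⟩
    · by_cases hj : j = i
      · subst hj; simp [setz]
      · simpa [setz, hj] using (h2 f hf).1 j
    · by_cases hj' : j = i
      · subst hj'; simp [setz]
      · simpa [setz, hj'] using (h2 f hf).2 j hj
  · intro f hf0 j hj
    obtain ⟨f, hf, rfl⟩ := List.mem_map.1 hf0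
    by_cases hj' : j = i
    · subst hj'; simp [setz]
    · have := h3 f hf j (Finset.mem_of_mem_insert_of_ne hj hj')
      simpa [setz, hj'] using this

lemma fillI (I : Finset (Fin n)) {m k : ℕ} {z : SS p (PF p n)} (hz : z ∈ Sub p n m k)
    (hd : del z = 0) : ∃ z' ∈ SubI p n I m k, ∃ y ∈ Sub p n (m+1) (k+1),
      del z' = 0 ∧ z = z' + del y := by
  induction I using Finset.induction_on with
  | empty =>
    refine ⟨z, ?_, 0, Submodule.zero_mem _, hd, by simp⟩
    refine Finsupp.supported_mono ?_ hz
    intro F hF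
    exact ⟨hF, by simp⟩
  | insert i I _ ih =>
    obtain ⟨z', hz', y, hy, hd', rfl⟩ := ih
    have hz2 := SubI_le _ _ _ hz'
    refine ⟨mp (setz i) z', SubI_setz I i hz',
      y + (prism (rem i) id z' - prism (rem i) (setz i) z'),
      Submodule.add_mem _ hy (Submodule.sub_mem _ (prism_rem_id i hz2) (prism_rem_setz i hz2)),
      by rw [del_mp, hd', map_zero], ?_⟩
    have e1 := prism_rel (rem i) id z'
    have e2 := prism_rel (rem i) (setz i) z'
    rw [hd', map_zero, add_zero] at e1 e2
    rw [map_add, map_sub, e1, e2, mp_id]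
    abel

lemma fill {m k : ℕ} {z : SS p (PF p n)} (hz : z ∈ Sub p n m k)
    (hd : del z = 0) : ∃ y ∈ Sub p n (m+1) (k+1), del y = z := by
  obtain ⟨z', hz', y, hy, hd', rfl⟩ := fillI Finset.univ hz hd
  refine ⟨cns (fun _ => some 0) z' + y, Submodule.add_mem _ ?_ hy, ?_⟩
  · refine supp_ind (fun F hF => ?_) hz'
    rw [cns_single]
    refine Finsupp.single_mem_supported _ _ ⟨by simp [hF.1.1], fun _ => 0, Finset.univ, by simp, ?_⟩
    intro f hf
    have hf' : f = fun _ => Option.some 0 := by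
      rcases List.mem_cons.1 hf with rfl | hf
      · rfl
      · ext1 i; exact hF.2 f hf i (Finset.mem_univ _)
    subst hf'
    simp
  · rw [map_add, del_cns, hd', map_zero, sub_zero]

lemma act_act (r s : ZMod p) : (act r ∘ act s : PF p n → PF p n) = act (r + s) := by
  ext1 f; funext i
  cases h : f i <;> simp [act, h, add_assoc]

/-- the alternating group ring operators on chains -/
noncomputable def TT (i : ℕ) : SS p (PF p n) →ₗ[ZMod p] SS p (PF p n) :=
  if Even i then LinearMap.id - mp (act 1) else ∑ r : ZMod p, mp (act r)

lemma TT_mem (i : ℕ) {m k : ℕ} {z : SS p (PF p n)} (hz : z ∈ Sub p n m k) :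
    TT i z ∈ Sub p n m k := by
  unfold TT
  split_ifs
  · exact Submodule.sub_mem _ hz (Sub_act 1 hz)
  · rw [LinearMap.sum_apply]
    exact Submodule.sum_mem _ fun r _ => Sub_act r hz

lemma del_TT (i : ℕ) (z : SS p (PF p n)) : del (TT i z) = TT i (del z) := by
  unfold TT
  split_ifs
  · simp [del_mp]
  · simp [LinearMap.sum_apply, del_mp]

lemma TT_TT (i : ℕ) (z : SS p (PF p n)) : TT (i+1) (TT i z) = 0 := by
  have e1 : ∑ r : ZMod p, mp (act (r + 1)) z = ∑ r : ZMod p, mp (act r) z :=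
    Fintype.sum_equiv (Equiv.addRight 1) _ _ (fun _ => rfl)
  have e2 : ∑ r : ZMod p, mp (act (1 + r)) z = ∑ r : ZMod p, mp (act r) z :=
    Fintype.sum_equiv (Equiv.addLeft 1) _ _ (fun _ => rfl)
  by_cases h : Even i
  · have h' : ¬ Even (i+1) := by rw [Nat.even_add_one]; simpa using h
    simp [TT, h, h', LinearMap.sum_apply, mp_mp, act_act, e1]
  · have h' : Even (i+1) := by rw [Nat.even_add_one]; simpa using h
    simp [TT, h, h', LinearMap.sum_apply, mp_mp, act_act, e2]

lemma exists_chain (i : ℕ) : ∃ e : ℕ → SS p (PF p n),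
    e 0 = single [fun _ => some 0] 1 ∧ (∀ j ≤ i, e j ∈ Sub p n j (j+1)) ∧
    (∀ j < i, del (e (j+1)) = TT j (e j)) := by
  induction i with
  | zero =>
    refine ⟨fun _ => single [fun _ => some 0] 1, rfl, ?_, by simp⟩
    intro j hj
    obtain rfl : j = 0 := by omega
    refine Finsupp.single_mem_supported _ _ ⟨by simp, fun _ => 0, Finset.univ, by simp, ?_⟩
    simp
  | succ i ih =>
    obtain ⟨e, h0, h1, h2⟩ := ih
    have hd : del (TT i (e i)) = 0 := by
      rw [del_TT]
      cases i with
      | zero => rw [h0, del_cons, del_nil]; simp [TT, mp_single]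
      | succ i => rw [h2 i (by omega), TT_TT]
    obtain ⟨y, hy, hdy⟩ := fill (TT_mem i (h1 i le_rfl)) hd
    refine ⟨Function.update e (i+1) y, by simp [h0], ?_, ?_⟩
    · intro j hj
      by_cases hji : j = i + 1
      · subst hji; simpa using hy
      · simpa [hji] using h1 j (by omega)
    · intro j hj
      by_cases hji : j = i
      · subst hji; simpa using hdy
      · have a1 : j ≠ i + 1 := by omega
        simpa [hji, a1] using h2 j (by omega)

/-- The Borsuk-Ulam type theorem -/
lemma main_contra (l : ℕ) (s : List (PF p n) → ZMod p) (rk : List (PF p n) → ℕ)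
    (hs' : ∀ (t : ZMod p) F, F ≠ [] → GoodB l F → s (F.map (act t)) = s F + t)
    (h1 : ∀ F, F ≠ [] → 1 ≤ rk F)
    (hle : ∀ F j, rk (F.eraseIdx j) ≤ rk F)
    (heq : ∀ F j, rk (F.eraseIdx j) = rk F → s (F.eraseIdx j) = s F)
    (hr : ∀ F, rk F ≤ l) : False := by
  have hp : 1 < p := (Fact.out : p.Prime).one_lt
  obtain ⟨e, he0, he1, he2⟩ := exists_chain (p := p) (n := n) l
  have hequiv : ∀ (t : ZMod p) (j : ℕ), j ≤ l →
      Psi s (j+1) (mp (act t) (e j)) = rho t (Psi s (j+1) (e j)) := by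
    intro t j hj
    refine supp_eq (f := Psi s (j+1) ∘ₗ mp (act t)) (g := rho t ∘ₗ Psi s (j+1)) ?_ (he1 j hj)
    intro F hF
    exact Psi_equiv s (act t) t (GoodB l) (fun F j h => h.erase j) (hs' t) (j+1) F hF.1
      (hF.2.mono hj)
  have haug : ∀ j ≤ l, ∑ x, Psi s (j+1) (e j) x = 1 := by
    intro j
    induction j with
    | zero =>
      intro _
      rw [he0, Psi_succ_single, del_cons, del_nil, map_zero, sub_zero, Psi_zero_single, hs_const]
      simp
    | succ j ih =>
      intro hj
      rw [← ih (by omega)]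
      have hd := Psi_del s (j+1) (e (j+1))
      rw [he2 j (by omega)] at hd
      by_cases h : Even j
      · have h' : ¬ Even (j+1) := by rw [Nat.even_add_one]; simpa using h
        simp only [dd, TT, if_pos h, if_neg h', LinearMap.sub_apply, LinearMap.id_apply, map_sub,
          hequiv 1 j (by omega)] at hd
        have hc := const_of_shift (fun x => Psi s (j+1+1) (e (j+1)) x - Psi s (j+1) (e j) x) (by
          intro x
          have := congrFun hd x
          simp only [Pi.sub_apply, rho_apply] at this
          linear_combination this)
        rw [← sub_eq_zero, ← Finset.sum_sub_distrib, Finset.sum_congr rfl (fun x _ => hc x)]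
        simp [ZMod.card]
      · have h' : Even (j+1) := by rw [Nat.even_add_one]; simpa using h
        simp only [dd, TT, if_neg h, if_pos h', LinearMap.sum_apply, map_sum] at hd
        rw [Finset.sum_congr rfl (fun t _ => hequiv t j (by omega))] at hd
        have := congrFun hd 0
        rw [nrm_apply, Finset.sum_apply] at this
        rw [this]
        simp only [rho_apply, zero_sub]
        exact Fintype.sum_equiv (Equiv.neg _) _ _ (fun _ => rfl)
  have hz : Psi s (l+1) (e l) = 0 := by
    refine supp_eq (f := Psi s (l+1)) (g := 0) ?_ (he1 l le_rfl)
    intro F hF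
    exact Psi_vanish s rk (GoodB l) (fun F j h => h.erase j) h1 hle heq (l+1) F hF.1 hF.2
      (Nat.lt_succ_of_le (hr F))
  have hfin := haug l le_rfl
  rw [hz] at hfin
  simp only [Pi.zero_apply, Finset.sum_const_zero] at hfin
  exact zero_ne_one hfin

end Partial

section Ramsey

variable {p : ℕ} [Fact p.Prime]

lemma free_shift {α : Type*} (q : ZMod p → α) (a b : ZMod p) (hab : a ≠ b)
    (h : ∀ x, q (x + a) = q (x + b)) (x y : ZMod p) : q x = q y := by
  have hd : b - a ≠ 0 := sub_ne_zero.2 hab.symm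
  have hper : ∀ x, q (x + (b - a)) = q x := by
    intro x
    have := h (x - a)
    rw [show x - a + a = x by ring] at this
    rw [this]; congr 1; ring
  have hk : ∀ (m : ℕ) x, q (x + m * (b - a)) = q x := by
    intro m
    induction m with
    | zero => simp
    | succ m ih =>
      intro x
      rw [← ih x, ← hper (x + m * (b - a))]; congr 1; push_cast; ring
  have := hk ((x - y) / (b - a)).val y
  rw [ZMod.natCast_zmod_val, div_mul_cancel₀ _ hd] at this
  rw [← this]; congr 1; ring

lemma exists_sign (α : Type*) : ∃ σ : (ZMod p → α) → ZMod p,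
    ∀ q : ZMod p → α, (∃ x y, q x ≠ q y) → ∀ t, σ (fun x => q (x + t)) = σ q + t := by
  classical
  let S : Setoid (ZMod p → α) :=
    { r := fun q q' => ∃ t, q' = fun x => q (x + t)
      iseqv := ⟨fun q => ⟨0, by simp⟩, by
        rintro q _ ⟨t, rfl⟩
        exact ⟨-t, by simp⟩, by
        rintro q _ _ ⟨t, rfl⟩ ⟨t', rfl⟩
        exact ⟨t' + t, by simp [add_assoc]⟩⟩ }
  have hex : ∀ q : ZMod p → α, ∃ t, q = fun x => (Quotient.out (Quotient.mk S q)) (x + t) :=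
    fun q => Quotient.mk_out (s := S) q
  choose σ hσ using hex
  refine ⟨σ, fun q hq t => ?_⟩
  have hmk : Quotient.mk S (fun x => q (x + t)) = Quotient.mk S q :=
    (Quotient.sound (s := S) ⟨t, rfl⟩).symm
  have e1 := hσ (fun x => q (x + t))
  rw [hmk] at e1
  have e2 := hσ q
  by_contra hne
  obtain ⟨x, y, hxy⟩ := hq
  apply hxy
  rw [e2]
  refine free_shift _ _ _ hne (fun z => ?_) _ _
  have a1 := congrFun e1 z
  have a2 := congrFun e2 (z + t)
  exact a1.symm.trans (a2.trans (by ring_nf))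

lemma pdom_restr {n : ℕ} (h : Fin n → ZMod p) (a : Finset (Fin n)) : pdom (restr h a) = a := by
  ext i
  by_cases h : i ∈ a <;> simp [pdom, restr, h]

theorem one_dim (κ : Type*) [Fintype κ] : ∃ l : ℕ, ∀ n (χ : PartBox p n l → κ),
    ∃ col, IsFull p n l {f | χ f = col} := by
  classical
  obtain ⟨l, hl⟩ : ∃ l, l = p * Fintype.card κ := ⟨_, rfl⟩
  refine ⟨l, fun n χ => ?_⟩
  by_contra hno
  push Not at hno
  have hz : n - l ≤ (pdom (restr (fun _ : Fin n => (0 : ZMod p)) Finset.univ)).card := by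
    rw [pdom_restr]; simp
  let χ' : PF p n → κ := fun f => if h : n - l ≤ (pdom f).card then χ ⟨f, h⟩ else χ ⟨_, hz⟩
  let q : List (PF p n) → ZMod p → Finset κ := fun F r => (F.map (fun f => χ' (act r f))).toFinset
  obtain ⟨σ, hσ⟩ := exists_sign (p := p) (Finset κ)
  have hmono : ∀ F j r, q (F.eraseIdx j) r ⊆ q F r := by
    intro F j r y hy
    simp only [q, List.mem_toFinset, List.mem_map] at hy ⊢
    obtain ⟨f, hf, rfl⟩ := hy
    exact ⟨f, List.mem_of_mem_eraseIdx hf, rfl⟩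
  refine main_contra (p := p) (n := n) l (fun F => σ (q F)) (fun F => ∑ r, (q F r).card)
    ?_ ?_ ?_ ?_ ?_
  · intro t F hF hgood
    have hq : q (F.map (act t)) = fun x => q F (x + t) := by
      ext1 r
      simp only [q, List.map_map]
      congr 2
      ext1 f
      simp only [Function.comp]
      rw [← act_act]; rfl
    simp only [hq]
    refine hσ _ ?_ t
    by_contra hconst
    push Not at hconst
    obtain ⟨f0, F', rfl⟩ := List.exists_cons_of_ne_nil hF
    refine hno (χ' (act 0 f0)) ?_
    have hmem : ∀ r, χ' (act 0 f0) ∈ q (f0 :: F') r := by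
      intro r; rw [hconst r 0]; simp [q]
    obtain ⟨x, a, ha, hx⟩ := hgood
    obtain ⟨a', ha', hcard⟩ := Finset.exists_subset_card_eq (show n - l ≤ a.card by omega)
    refine ⟨x, a', hcard, fun r => ?_⟩
    have hr := hmem r
    simp only [q, List.mem_toFinset, List.mem_map] at hr
    obtain ⟨f, hf, hfc⟩ := hr
    obtain ⟨hfx, hfa⟩ := hx f hf
    have hsub : a' ⊆ pdom f := by
      intro i hi
      simp only [pdom, Finset.mem_filter, Finset.mem_univ, true_and]
      exact Option.isSome_iff_ne_none.2 (hfa i (ha' hi))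
    have hact : act r f = restr (fun i => r + x i) (pdom f) := by
      funext i
      rcases hfx i with h | h <;> simp [act, restr, pdom, h]
    have hm : n - l ≤ (pdom (restr (fun i => r + x i) (pdom f))).card := by
      rw [pdom_restr, ← hcard]; exact Finset.card_le_card hsub
    refine ⟨pdom f, hsub, hm, ?_⟩
    change χ ⟨restr (fun i => r + x i) (pdom f), hm⟩ = _
    rw [← hfc, hact]
    simp only [χ', dif_pos hm]
  · intro F hF
    obtain ⟨f0, F', rfl⟩ := List.exists_cons_of_ne_nil hF
    have : 0 < (q (f0 :: F') 0).card := Finset.card_pos.2 ⟨χ' (act 0 f0), by simp [q]⟩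
    exact this.trans_le (Finset.single_le_sum (f := fun r => (q (f0 :: F') r).card)
      (fun _ _ => Nat.zero_le _) (Finset.mem_univ 0))
  · intro F j
    exact Finset.sum_le_sum fun r _ => Finset.card_le_card (hmono F j r)
  · intro F j h
    have := (Finset.sum_eq_sum_iff_of_le
      (fun r _ => Finset.card_le_card (hmono F j r))).1 h
    have hq : q (F.eraseIdx j) = q F := by
      ext1 r
      exact Finset.eq_of_subset_of_card_le (hmono F j r) (this r (Finset.mem_univ _)).ge
    simp only [hq]
  · intro F
    calc ∑ r, (q F r).card ≤ ∑ r : ZMod p, Fintype.card κ :=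
          Finset.sum_le_sum fun r _ => Finset.card_le_univ _
      _ = l := by simp [ZMod.card, hl]

end Ramsey

section Product

def Core (c m : ℕ) (T : Fin m → ℕ × ℕ × ℕ) : Prop :=
  ∀ χ : (∀ i : Fin m, PartBox (T i).1 (T i).2.1 (T i).2.2) → Fin c,
    ∃ L : ∀ i : Fin m, Set (PartBox (T i).1 (T i).2.1 (T i).2.2),
      (∀ i, IsFull (T i).1 (T i).2.1 (T i).2.2 (L i)) ∧
      ∃ color : Fin c,
        ∀ g : ∀ i : Fin m, PartBox (T i).1 (T i).2.1 (T i).2.2,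
          (∀ i, g i ∈ L i) → χ g = color

lemma core_of_cast (c m : ℕ) (ts : List (ℕ × ℕ × ℕ)) (h : m = ts.length)
    (hc : Core c m (fun i => ts.get (i.cast h))) : FSCore c ts := by
  subst h
  exact hc

lemma core_snoc (c m : ℕ) (T : Fin (m+1) → ℕ × ℕ × ℕ)
    (h1 : Core c m (fun i => T i.castSucc))
    (h2 : ∀ χ : PartBox (T (Fin.last m)).1 (T (Fin.last m)).2.1 (T (Fin.last m)).2.2 →
        ((∀ i : Fin m, PartBox (T i.castSucc).1 (T i.castSucc).2.1 (T i.castSucc).2.2) → Fin c),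
      ∃ col, IsFull (T (Fin.last m)).1 (T (Fin.last m)).2.1 (T (Fin.last m)).2.2
        {f | χ f = col}) : Core c (m+1) T := by
  intro χ
  let B : Fin (m+1) → Type := fun i => PartBox (T i).1 (T i).2.1 (T i).2.2
  obtain ⟨ξ, hξ⟩ := h2 (fun b g => χ (Fin.snoc (α := B) g b))
  obtain ⟨L, hL, color, hcol⟩ := h1 ξ
  refine ⟨Fin.snoc (α := fun i => Set (B i)) L
    {f | (fun g => χ (Fin.snoc (α := B) g f)) = ξ}, ?_, color, ?_⟩
  · intro i
    refine Fin.lastCases ?_ (fun i => ?_) i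
    · rw [Fin.snoc_last]; exact hξ
    · rw [Fin.snoc_castSucc]; exact hL i
  · intro g hg
    have e1 := hg (Fin.last m)
    rw [Fin.snoc_last] at e1
    have e2 := hcol (fun i => g i.castSucc) (fun i => by
      have := hg i.castSucc
      rwa [Fin.snoc_castSucc] at this)
    rw [← e2]
    have e3 := congrFun e1 (fun i => g i.castSucc)
    rw [← e3]
    congr 1
    exact (Fin.snoc_init_self (α := B) g).symm

lemma core_snoc' (c m : ℕ) (T : Fin (m+1) → ℕ × ℕ × ℕ) (S : Fin m → ℕ × ℕ × ℕ)
    (hS : (fun i => T i.castSucc) = S) (t : ℕ × ℕ × ℕ) (ht : T (Fin.last m) = t)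
    (h1 : Core c m S)
    (h2 : ∀ χ : PartBox t.1 t.2.1 t.2.2 →
        ((∀ i : Fin m, PartBox (S i).1 (S i).2.1 (S i).2.2) → Fin c),
      ∃ col, IsFull t.1 t.2.1 t.2.2 {f | χ f = col}) : Core c (m+1) T := by
  subst hS ht
  exact core_snoc c m T h1 h2

lemma aux (c : ℕ) (ps : List ℕ) (hps : ∀ q ∈ ps, q.Prime) (ts : List (ℕ × ℕ × ℕ))
    (hts : ∀ t ∈ ts, t.1.Prime) (hcore : FSCore c ts) : FSAux c ps ts := by
  induction ps generalizing ts with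
  | nil => exact hcore
  | cons p ps ih =>
    have : Fact p.Prime := ⟨hps p (by simp)⟩
    have : ∀ i : Fin ts.length,
        Finite (PartBox (ts.get i).1 (ts.get i).2.1 (ts.get i).2.2) := by
      intro i
      have : NeZero (ts.get i).1 := ⟨(hts _ (List.get_mem ts i)).ne_zero⟩
      unfold PartBox
      infer_instance
    haveI : Fintype ((∀ i : Fin ts.length,
        PartBox (ts.get i).1 (ts.get i).2.1 (ts.get i).2.2) → Fin c) := Fintype.ofFinite _
    obtain ⟨l, hl⟩ := one_dim (p := p) ((∀ i : Fin ts.length,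
        PartBox (ts.get i).1 (ts.get i).2.1 (ts.get i).2.2) → Fin c)
    refine ⟨l, fun n _ => ih (fun q hq => hps q (by simp [hq])) _ ?_ ?_⟩
    · intro t ht
      rcases List.mem_append.1 ht with h | h
      · exact hts t h
      · rw [List.mem_singleton.1 h]; exact hps p (by simp)
    · have hlen : ts.length + 1 = (ts ++ [(p, n, l)]).length := by simp
      refine core_of_cast c (ts.length + 1) _ hlen ?_
      have hT : (fun i : Fin (ts.length + 1) => (ts ++ [(p, n, l)]).get (i.cast hlen)) =
          Fin.snoc (α := fun _ => ℕ × ℕ × ℕ) ts.get (p, n, l) := by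
        ext1 i
        refine Fin.lastCases ?_ (fun i => ?_) i
        · rw [Fin.snoc_last]; simp
        · rw [Fin.snoc_castSucc]; simp
      rw [hT]
      have e1 : (fun i : Fin ts.length => (Fin.snoc (α := fun _ => ℕ × ℕ × ℕ) ts.get (p, n, l)
          : Fin (ts.length + 1) → ℕ × ℕ × ℕ) i.castSucc) = ts.get := by
        ext1 i; rw [Fin.snoc_castSucc]
      exact core_snoc' c _ _ _ e1 _ (Fin.snoc_last _ _) hcore (hl n)

end Product

end FS

/-- **The Farah–Solecki theorem.** For primes `p₁, …, p_k` and `c ≥ 1` colors: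
`∃ l₁ ∀ n₁ ≥ l₁ ⋯ ∃ l_k ∀ n_k ≥ l_k`, for every coloring with `c` colors of
`∏ᵢ (ℤ/pᵢ)^{nᵢ:lᵢ}` there are full sets `Lᵢ ⊆ (ℤ/pᵢ)^{nᵢ:lᵢ}` such that `L₁ × ⋯ × L_k` is
monochromatic. -/
theorem farah_solecki (k c : ℕ) (hc : 0 < c) (p : Fin k → ℕ) (hp : ∀ i, (p i).Prime) :
    FSAux c (List.ofFn p) [] := by
  refine FS.aux c _ ?_ [] (by simp) ?_
  · intro q hq
    obtain ⟨i, rfl⟩ := (List.mem_ofFn' _ _).1 hq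
    exact hp i
  · intro χ
    refine ⟨fun i => i.elim0, fun i => i.elim0, χ (fun i => i.elim0), fun g _ => ?_⟩
    congr 1
    funext i
    exact i.elim0
end

section
/- Let (𝓕, 𝓟, ∙•, •) be a linear, vanishing Ramsey domain over a normed composition space (A, X, ∙, ·, ∂, |·|), and assume that each set in 𝓟 is finite. If condition (LP) holds, then condition (R) holds. Condition (R): for every positive integer c and every P ∈ 𝓟 there is F ∈ 𝓕 such that F ∙• P is defined and for every coloring of F ∙• P with c colors there is f ∈ F such that f ∙ P = {f ∙ x : x ∈ P} is monochromatic. Condition (LP): for every positive integer c, every P ∈ 𝓟, and every y ∈ ∂P, there are F ∈ 𝓕 and a ∈ A such that F ∙• P is defined, a ∙ y is defined, and for every coloring with c colors of F_a ∙ P_y = {f ∙ x : f ∈ F_a, x ∈ P_y} there is f ∈ F_a such that f ∙ P_y is monochromatic; here P_y = {x ∈ P : ∂x = y} and F_a = {f ∈ F : f extends a}. -/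
/-- A *normed composition space* `(A, X, ∙, ·, ∂, |·|)`: a partial multiplication on `A`,
a partial action of `A` on `X` (partial operations are modelled via `Option`), a truncation
`∂ : X → X` and a norm `|·| : X → L` into a partial order, subject to the axioms (i)–(iii)
and the action condition. -/
structure NormedCompositionSpace (A X L : Type) [PartialOrder L] where
  /-- the partial multiplication `(a, b) ↦ a · b` on `A` -/
  mul : A → A → Option A
  /-- the partial action `(a, x) ↦ a ∙ x` of `A` on `X` -/
  act : A → X → Option X
  /-- the truncation `∂ : X → X` -/
  trunc : X → X
  /-- the norm `|·| : X → L` -/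
  norm : X → L
  /-- the action condition: if `a ∙ (b ∙ x)` and `(a · b) ∙ x` are both defined, then they
  are equal -/
  act_act : ∀ a b x u v m w, act b x = some u → act a u = some v →
    mul a b = some m → act m x = some w → v = w
  /-- (i) if `a ∙ x` and `a ∙ ∂x` are defined, then `∂(a ∙ x) = a ∙ ∂x` -/
  trunc_act : ∀ a x y z, act a x = some y → act a (trunc x) = some z → trunc y = z
  /-- (ii) `|∂x| ≤ |x|` -/
  norm_trunc : ∀ x, norm (trunc x) ≤ norm x
  /-- (iii) if `|x| ≤ |y|` and `a ∙ y` is defined, then `a ∙ x` is defined and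
  `|a ∙ x| ≤ |a ∙ y|` -/
  act_norm : ∀ a x y z, norm x ≤ norm y → act a y = some z →
    ∃ w, act a x = some w ∧ norm w ≤ norm z

namespace NormedCompositionSpace

variable {A X L : Type} [PartialOrder L]

/-- `b` *extends* `a` if whenever `a ∙ x` is defined, `b ∙ x` is defined and equal to it. -/
def Extends (S : NormedCompositionSpace A X L) (b a : A) : Prop :=
  ∀ x y, S.act a x = some y → S.act b x = some y

/-- `∂P = {∂x : x ∈ P}`. -/
def truncSet (S : NormedCompositionSpace A X L) (P : Set X) : Set X := S.trunc '' P

end NormedCompositionSpace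

/-- A *Ramsey domain* `(𝓕, 𝓟, ∙•, •)` over a normed composition space: families `𝓕, 𝓟` of
nonempty subsets of `A` and `X` with partial operations `•` (composition, given pointwise by
`·`) and `∙•` (action, given pointwise by `∙`), satisfying conditions (a), (b), (c). -/
structure RamseyDomain {A X L : Type} [PartialOrder L]
    (S : NormedCompositionSpace A X L) where
  /-- the family `𝓕` of subsets of `A` -/
  F : Set (Set A)
  /-- the family `𝓟` of subsets of `X` -/
  P : Set (Set X)
  F_nonempty : ∀ F₀ ∈ F, F₀.Nonempty
  P_nonempty : ∀ P₀ ∈ P, P₀.Nonempty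
  /-- the partial operation `F • G` on `𝓕` -/
  comp : Set A → Set A → Option (Set A)
  /-- the partial operation `F ∙• P` from `𝓕 × 𝓟` to `𝓟` -/
  compAct : Set A → Set X → Option (Set X)
  comp_mem : ∀ F₁ ∈ F, ∀ F₂ ∈ F, ∀ H, comp F₁ F₂ = some H →
    H ∈ F ∧ (∀ f ∈ F₁, ∀ g ∈ F₂, ∃ h, S.mul f g = some h) ∧
      H = {h | ∃ f ∈ F₁, ∃ g ∈ F₂, S.mul f g = some h}
  compAct_mem : ∀ F₀ ∈ F, ∀ P₀ ∈ P, ∀ Q, compAct F₀ P₀ = some Q →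
    Q ∈ P ∧ (∀ f ∈ F₀, ∀ x ∈ P₀, ∃ y, S.act f x = some y) ∧
      Q = {y | ∃ f ∈ F₀, ∃ x ∈ P₀, S.act f x = some y}
  /-- (a) if `F ∙• (G ∙• P)` is defined then `(F • G) ∙• P` is defined -/
  cond_a : ∀ F₁ ∈ F, ∀ F₂ ∈ F, ∀ P₀ ∈ P, ∀ Q R, compAct F₂ P₀ = some Q →
    compAct F₁ Q = some R → ∃ H, comp F₁ F₂ = some H ∧ (compAct H P₀).isSome
  /-- (b) if `P ∈ 𝓟` then `∂P ∈ 𝓟` -/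
  cond_b : ∀ P₀ ∈ P, S.truncSet P₀ ∈ P
  /-- (c) if `F ∙• ∂P` is defined then there is `G ∈ 𝓕` with `G ∙• P` defined such that each
  `f ∈ F` has an extension `g ∈ G` -/
  cond_c : ∀ F₀ ∈ F, ∀ P₀ ∈ P, (compAct F₀ (S.truncSet P₀)).isSome →
    ∃ G ∈ F, (compAct G P₀).isSome ∧ ∀ f ∈ F₀, ∃ g ∈ G, S.Extends g f

namespace RamseyDomain

variable {A X L : Type} [PartialOrder L] {S : NormedCompositionSpace A X L}

/-- The Ramsey domain is *vanishing* if each `P ∈ 𝓟` is shrunk to a single point by some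
iterate of the truncation. -/
def Vanishing (D : RamseyDomain S) : Prop :=
  ∀ P₀ ∈ D.P, ∃ (t : ℕ) (x : X), (S.truncSet)^[t] P₀ = {x}

/-- The Ramsey domain is *linear* if for each `P ∈ 𝓟` the set `{|x| : x ∈ P}` is linearly
ordered in `L`. -/
def Linear (D : RamseyDomain S) : Prop :=
  ∀ P₀ ∈ D.P, ∀ x ∈ P₀, ∀ y ∈ P₀, S.norm x ≤ S.norm y ∨ S.norm y ≤ S.norm x

/-- Condition (R): for every number of colors `c ≥ 1` and every `P ∈ 𝓟` there is `F ∈ 𝓕`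
with `F ∙• P` defined such that every coloring of `F ∙• P` with `c` colors admits `f ∈ F`
with `f ∙ P` monochromatic. -/
def CondR (D : RamseyDomain S) : Prop :=
  ∀ c : ℕ, 0 < c → ∀ P₀ ∈ D.P, ∃ F₀ ∈ D.F, ∃ Q, D.compAct F₀ P₀ = some Q ∧
    ∀ χ : X → Fin c, ∃ f ∈ F₀, ∃ color : Fin c,
      ∀ x ∈ P₀, ∀ y, S.act f x = some y → χ y = color

/-- Condition (LP), the local pigeonhole principle: for every number of colors `c ≥ 1`,
every `P ∈ 𝓟`, and every `y ∈ ∂P`, there are `F ∈ 𝓕` and `a ∈ A` such that `F ∙• P` is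
defined, `a ∙ y` is defined, and every coloring with `c` colors of `F_a ∙ P_y` admits
`f ∈ F_a` with `f ∙ P_y` monochromatic (where `P_y = {x ∈ P : ∂x = y}` and
`F_a = {f ∈ F : f extends a}`). -/
def CondLP (D : RamseyDomain S) : Prop :=
  ∀ c : ℕ, 0 < c → ∀ P₀ ∈ D.P, ∀ y ∈ S.truncSet P₀,
    ∃ F₀ ∈ D.F, ∃ a : A, (D.compAct F₀ P₀).isSome ∧ (S.act a y).isSome ∧
      ∀ χ : X → Fin c, ∃ f ∈ F₀, S.Extends f a ∧ ∃ color : Fin c,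
        ∀ x ∈ P₀, S.trunc x = y → ∀ z, S.act f x = some z → χ z = color

end RamseyDomain

namespace RamseyDomain

variable {A X L : Type} [PartialOrder L] {S : NormedCompositionSpace A X L}

/-- Composing two members of the family. -/
lemma exists_comp (D : RamseyDomain S) {G H : Set A} {P₀ Q R : Set X}
    (hG : G ∈ D.F) (hH : H ∈ D.F) (hP : P₀ ∈ D.P)
    (hGP : D.compAct G P₀ = some Q) (hHQ : D.compAct H Q = some R) :
    ∃ K ∈ D.F, ∃ R', D.compAct K P₀ = some R' ∧ ∀ h ∈ H, ∀ g ∈ G, ∃ k ∈ K,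
      ∀ x ∈ P₀, ∀ z, S.act k x = some z →
        ∃ u ∈ Q, S.act g x = some u ∧ S.act h u = some z := by
  obtain ⟨K, hK, hKP⟩ := D.cond_a H hH G hG P₀ hP Q R hGP hHQ
  obtain ⟨R', hR'⟩ := Option.isSome_iff_exists.1 hKP
  obtain ⟨hKF, hmul, hKeq⟩ := D.comp_mem H hH G hG K hK
  obtain ⟨hQ, hact, hQeq⟩ := D.compAct_mem G hG P₀ hP Q hGP
  obtain ⟨-, hact2, -⟩ := D.compAct_mem H hH Q hQ R hHQ
  refine ⟨K, hKF, R', hR', fun h hh g hg => ?_⟩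
  obtain ⟨k, hk⟩ := hmul h hh g hg
  refine ⟨k, by rw [hKeq]; exact ⟨h, hh, g, hg, hk⟩, fun x hx z hz => ?_⟩
  obtain ⟨u, hu⟩ := hact g hg x hx
  have huQ : u ∈ Q := by rw [hQeq]; exact ⟨g, hg, x, hx, hu⟩
  obtain ⟨v, hv⟩ := hact2 h hh u huQ
  have := S.act_act h g x u v k z hu hv hk hz
  exact ⟨u, huQ, hu, this ▸ hv⟩

/-- Truncation commutes with the action as soon as `f ∙ x` is defined. -/
lemma act_trunc {f : A} {x u : X} (h : S.act f x = some u) :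
    S.act f (S.trunc x) = some (S.trunc u) := by
  obtain ⟨w, hw, -⟩ := S.act_norm f (S.trunc x) x u (S.norm_trunc x) h
  rw [hw, S.trunc_act f x u w h hw]

/-- Fibrewise version of the pigeonhole principle. -/
lemma fibre (D : RamseyDomain S) (hlin : D.Linear) (hLP : D.CondLP) (c : ℕ) (hc : 0 < c)
    (n : ℕ) : ∀ P₀ ∈ D.P, ∀ T : Finset X, T.card ≤ n → (T : Set X) ⊆ S.truncSet P₀ →
    ∃ F₀ ∈ D.F, ∃ Q, D.compAct F₀ P₀ = some Q ∧ ∀ χ : X → Fin c, ∃ f ∈ F₀, ∀ y ∈ T,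
      ∃ color : Fin c, ∀ x ∈ P₀, S.trunc x = y → ∀ z, S.act f x = some z → χ z = color := by
  classical
  induction n with
  | zero =>
    intro P₀ hP T hT _
    obtain ⟨x, hx⟩ := D.P_nonempty P₀ hP
    obtain ⟨F₀, hF, a, hdef, -, -⟩ := hLP c hc P₀ hP (S.trunc x) ⟨x, hx, rfl⟩
    obtain ⟨Q, hQ⟩ := Option.isSome_iff_exists.1 hdef
    obtain ⟨f, hf⟩ := D.F_nonempty F₀ hF
    have : T = ∅ := by simpa using hT
    subst this
    exact ⟨F₀, hF, Q, hQ, fun χ => ⟨f, hf, by simp⟩⟩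
  | succ n ih =>
    intro P₀ hP T hT hTP
    by_cases hne : T.Nonempty
    swap
    · exact ih P₀ hP T (by simp [Finset.not_nonempty_iff_eq_empty.1 hne]) hTP
    obtain ⟨y, hyT, hymax⟩ : ∃ y ∈ T, ∀ y' ∈ T, S.norm y' ≤ S.norm y := by
      obtain ⟨y, hy, hmax⟩ := T.exists_maximalFor S.norm hne
      refine ⟨y, hy, fun y' hy' => ?_⟩
      rcases hlin _ (D.cond_b P₀ hP) y (hTP hy) y' (hTP hy') with h | h
      · exact hmax hy' h
      · exact h
    obtain ⟨F₀, hF, a, hdef, hay, hcol⟩ := hLP c hc P₀ hP y (hTP hyT)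
    obtain ⟨Q, hQ⟩ := Option.isSome_iff_exists.1 hdef
    obtain ⟨ya, hya⟩ := Option.isSome_iff_exists.1 hay
    obtain ⟨hQP, hact, hQeq⟩ := D.compAct_mem F₀ hF P₀ hP Q hQ
    -- the action of `a` on the remaining truncations
    let φ : X → X := fun t => (S.act a t).getD t
    have hφ : ∀ t ∈ T, S.act a t = some (φ t) := by
      intro t ht
      obtain ⟨w, hw, -⟩ := S.act_norm a t y ya (hymax t ht) hya
      simp [φ, hw]
    have hfib : ∀ f ∈ F₀, S.Extends f a → ∀ x u, S.trunc x ∈ T → S.act f x = some u →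
        S.trunc u = φ (S.trunc x) := by
      intro f _ hfa x u hx hu
      have h1 := hfa _ _ (hφ _ hx)
      rw [act_trunc hu] at h1
      exact Option.some.inj h1
    obtain ⟨H, hH, R, hR, hHcol⟩ := ih Q hQP ((T.erase y).image φ)
      (by
        refine Finset.card_image_le.trans ?_
        rw [Finset.card_erase_of_mem hyT]
        omega)
      (by
        intro t ht
        simp only [Finset.coe_image, Set.mem_image, Finset.mem_coe] at ht
        obtain ⟨t', ht', rfl⟩ := ht
        have ht'T := Finset.mem_of_mem_erase ht'
        obtain ⟨x, hx, rfl⟩ := hTP ht'T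
        obtain ⟨f, hf, hfa, -⟩ := hcol (fun _ => ⟨0, hc⟩)
        obtain ⟨u, hu⟩ := hact f hf x hx
        refine ⟨u, ?_, hfib f hf hfa x u ht'T hu⟩
        rw [hQeq]
        exact ⟨f, hf, x, hx, hu⟩)
    obtain ⟨K, hK, R', hR', hKcomp⟩ := D.exists_comp hF hH hP hQ hR
    refine ⟨K, hK, R', hR', fun χ => ?_⟩
    obtain ⟨h, hh, hhcol⟩ := hHcol χ
    obtain ⟨f, hf, hfa, color, hfcol⟩ := hcol (fun q => χ ((S.act h q).getD q))
    obtain ⟨k, hk, hkx⟩ := hKcomp h hh f hf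
    refine ⟨k, hk, fun t ht => ?_⟩
    by_cases hty : t = y
    · subst hty
      refine ⟨color, fun x hx hxt z hz => ?_⟩
      obtain ⟨u, -, hu, huz⟩ := hkx x hx z hz
      have := hfcol x hx hxt u hu
      simpa [huz] using this
    · obtain ⟨col, hcl⟩ := hhcol (φ t)
        (Finset.mem_image_of_mem _ (Finset.mem_erase.2 ⟨hty, ht⟩))
      refine ⟨col, fun x hx hxt z hz => ?_⟩
      obtain ⟨u, huQ, hu, huz⟩ := hkx x hx z hz
      subst hxt
      exact hcl u huQ (hfib f hf hfa x u ht hu) z huz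

end RamseyDomain

/-- **Solecki's abstract Ramsey theorem.** For a linear, vanishing Ramsey domain over a
normed composition space in which every set in `𝓟` is finite, the local pigeonhole
principle (LP) implies the Ramsey condition (R). -/
theorem abstract_ramsey_theorem {A X L : Type} [PartialOrder L]
    {S : NormedCompositionSpace A X L} (D : RamseyDomain S)
    (hlin : D.Linear) (hvan : D.Vanishing) (hfin : ∀ P₀ ∈ D.P, P₀.Finite)
    (hLP : D.CondLP) : D.CondR := by
  classical
  intro c hc
  suffices h : ∀ (t : ℕ), ∀ P₀ ∈ D.P, (∃ x, (S.truncSet)^[t] P₀ = {x}) →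
      ∃ F₀ ∈ D.F, ∃ Q, D.compAct F₀ P₀ = some Q ∧
        ∀ χ : X → Fin c, ∃ f ∈ F₀, ∃ color : Fin c,
          ∀ x ∈ P₀, ∀ y, S.act f x = some y → χ y = color by
    intro P₀ hP
    obtain ⟨t, ht⟩ := hvan P₀ hP
    exact h t P₀ hP ht
  intro t
  induction t with
  | zero =>
    rintro P₀ hP ⟨x, hx⟩
    simp only [Function.iterate_zero, id] at hx
    subst hx
    obtain ⟨F₀, hF, a, hdef, -, hcol⟩ := hLP c hc {x} hP (S.trunc x) ⟨x, rfl, rfl⟩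
    obtain ⟨Q, hQ⟩ := Option.isSome_iff_exists.1 hdef
    refine ⟨F₀, hF, Q, hQ, fun χ => ?_⟩
    obtain ⟨f, hf, -, color, hfc⟩ := hcol χ
    refine ⟨f, hf, color, fun x' hx' => hfc x' hx' ?_⟩
    rw [Set.mem_singleton_iff.1 hx']
  | succ t ih =>
    rintro P₀ hP ⟨x, hx⟩
    rw [Function.iterate_succ_apply] at hx
    obtain ⟨F₀, hF, Q₀, hQ₀, hcol⟩ := ih _ (D.cond_b P₀ hP) ⟨x, hx⟩
    obtain ⟨-, hact₀, -⟩ := D.compAct_mem F₀ hF _ (D.cond_b P₀ hP) Q₀ hQ₀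
    obtain ⟨G, hG, hdef, hext⟩ := D.cond_c F₀ hF P₀ hP (by simp [hQ₀])
    obtain ⟨Q, hQ⟩ := Option.isSome_iff_exists.1 hdef
    obtain ⟨hQP, hact, hQeq⟩ := D.compAct_mem G hG P₀ hP Q hQ
    have hfinT : (S.truncSet Q).Finite := hfin _ (D.cond_b Q hQP)
    obtain ⟨H, hH, R, hR, hHcol⟩ := D.fibre hlin hLP c hc _ Q hQP hfinT.toFinset le_rfl
      (by simp)
    obtain ⟨K, hK, R', hR', hKcomp⟩ := D.exists_comp hG hH hP hQ hR
    refine ⟨K, hK, R', hR', fun χ => ?_⟩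
    obtain ⟨h, hh, hhcol⟩ := hHcol χ
    have hex : ∀ y, ∃ color : Fin c, y ∈ S.truncSet Q →
        ∀ x ∈ Q, S.trunc x = y → ∀ z, S.act h x = some z → χ z = color := by
      intro y
      by_cases hy : y ∈ S.truncSet Q
      · obtain ⟨col, hcl⟩ := hhcol y (by simpa using hy)
        exact ⟨col, fun _ => hcl⟩
      · exact ⟨⟨0, hc⟩, fun h => absurd h hy⟩
    choose χ' hχ' using hex
    obtain ⟨f, hf, color, hfc⟩ := hcol χ'
    obtain ⟨g, hg, hgf⟩ := hext f hf
    obtain ⟨k, hk, hkx⟩ := hKcomp h hh g hg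
    refine ⟨k, hk, color, fun x hx z hz => ?_⟩
    obtain ⟨u, huQ, hu, huz⟩ := hkx x hx z hz
    have hxT : S.trunc x ∈ S.truncSet P₀ := ⟨x, hx, rfl⟩
    obtain ⟨v, hv⟩ := hact₀ f hf _ hxT
    have h1 := hgf _ _ hv
    rw [RamseyDomain.act_trunc hu] at h1
    have h2 : S.trunc u = v := Option.some.inj h1
    rw [← hfc _ hxT v hv]
    exact hχ' v ⟨u, huQ, h2⟩ u huQ h2 z huz
end
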